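/- arXiv:1709.06608 — 6 statements merged into one kernel-verified Lean document; each statement's English description precedes it below -/
import Mathlib

section
/- Let Q be an arbitrary quadratic form on a real vector space V and let Cl(Q) be its Clifford algebra. Denote by j̄ (j = 0,1,2,3) the subspaces of quaternion type. Then for the commutator [U,V] := UV − VU the following inclusions hold: [j̄, j̄] ⊆ 2̄ for every j ∈ {0,1,2,3}; [j̄, 2̄] ⊆ j̄ for every j ∈ {0,1,2,3}; [0̄, 1̄] ⊆ 3̄; [0̄, 3̄] ⊆ 1̄; and [1̄, 3̄] ⊆ 0̄. (An inclusion [S,T] ⊆ W means: for all U ∈ S and V ∈ T, UV − VU ∈ W.) -/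
open CliffordAlgebra

/-- The subspace of quaternion type `j` (j = 0,1,2,3) of a Clifford algebra:
elements `U` with `involute U = (−1)^j • U` and `reverse U = (−1)^{j(j−1)/2} • U`. -/
def quatType {V : Type*} [AddCommGroup V] [Module ℝ V] (Q : QuadraticForm ℝ V) (j : ℕ) :
    Set (CliffordAlgebra Q) :=
  {U | involute U = ((-1 : ℝ) ^ j) • U ∧ reverse U = ((-1 : ℝ) ^ (j * (j - 1) / 2)) • U}

/-!
The commutator of eigenvectors of `involute` is an eigenvector for the product of the eigenvalues,
and likewise for `reverse`, except that reversing the factors contributes an extra sign. Writing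
`j(j-1)/2` as `j.choose 2` and using `(j + k).choose 2 = j.choose 2 + k.choose 2 + j * k`, the two
products of signs are exactly those of type `j + k + 2 * (j * k + 1)`, and the signs of type `l`
depend only on `l` modulo `4`.
-/

section Signs

theorem add_choose_two (j k : ℕ) : (j + k).choose 2 = j.choose 2 + k.choose 2 + j * k := by
  induction k with
  | zero => simp
  | succ k ih =>
    rw [← add_assoc, Nat.choose_succ_succ', Nat.choose_succ_succ' k, ih, Nat.choose_one_right,
      Nat.choose_one_right]
    ring

theorem choose_two_mod_two (n : ℕ) : n.choose 2 % 2 = n % 4 / 2 := by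
  induction n with
  | zero => rfl
  | succ n ih =>
    rw [add_choose_two, Nat.choose_eq_zero_of_lt (by decide : 1 < 2)]
    lia

variable {R : Type*} [Monoid R] [HasDistribNeg R]

theorem neg_one_pow_eq_of_modEq_two {m n : ℕ} (h : m ≡ n [MOD 2]) : (-1 : R) ^ m = (-1) ^ n :=
  neg_one_pow_congr (by rw [Nat.even_iff, Nat.even_iff, h])

theorem neg_one_pow_choose_two_eq_of_modEq_four {m n : ℕ} (h : m ≡ n [MOD 4]) :
    (-1 : R) ^ m.choose 2 = (-1) ^ n.choose 2 :=
  neg_one_pow_eq_of_modEq_two <| by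
    rw [Nat.ModEq, choose_two_mod_two, choose_two_mod_two, h]

theorem neg_one_pow_choose_two_two_mul (m : ℕ) : (-1 : R) ^ (2 * m).choose 2 = (-1) ^ m :=
  neg_one_pow_eq_of_modEq_two <| by
    rw [Nat.ModEq, choose_two_mod_two]
    omega

theorem neg_one_pow_choose_two_add_two_mul (n m : ℕ) :
    (-1 : R) ^ (n + 2 * m).choose 2 = (-1) ^ n.choose 2 * (-1) ^ m := by
  have cross_even : Even (n * (2 * m)) := (even_two_mul m).mul_left n
  rw [add_choose_two, pow_add, pow_add, neg_one_pow_choose_two_two_mul, cross_even.neg_one_pow,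
    mul_one]

theorem neg_one_pow_choose_two_commutator (j k : ℕ) :
    (-1 : R) ^ (j + k + 2 * (j * k + 1)).choose 2 = -((-1) ^ j.choose 2 * (-1) ^ k.choose 2) := by
  have cross_sq : (-1 : R) ^ (j * k) * (-1) ^ (j * k) = 1 := by
    rw [← pow_add, (Even.add_self _).neg_one_pow]
  rw [neg_one_pow_choose_two_add_two_mul, add_choose_two, pow_add, pow_add, pow_succ,
    mul_neg_one, mul_neg, mul_assoc, cross_sq, mul_one]

end Signs

section Eigenspaces

theorem commutator_smul_smul {R A : Type*} [CommSemiring R] [Ring A] [Algebra R A] (a b : R)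
    (U W : A) : (a • U) * (b • W) - (b • W) * (a • U) = (a * b) • (U * W - W * U) := by
  rw [smul_mul_smul_comm, smul_mul_smul_comm, mul_comm b, smul_sub]

variable {R A : Type*} [CommRing R] [Ring A] [Algebra R A] {U W : A} {a b : R}

theorem commutator_mem_eigenspace_of_algHom (f : A →ₐ[R] A)
    (hU : U ∈ Module.End.eigenspace f.toLinearMap a)
    (hW : W ∈ Module.End.eigenspace f.toLinearMap b) :
    U * W - W * U ∈ Module.End.eigenspace f.toLinearMap (a * b) := by
  rw [Module.End.mem_eigenspace_iff, AlgHom.toLinearMap_apply] at hU hW ⊢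
  rw [map_sub, map_mul, map_mul, hU, hW, commutator_smul_smul]

theorem commutator_mem_eigenspace_of_map_mul_rev {f : A →ₗ[R] A}
    (map_mul_rev : ∀ x y, f (x * y) = f y * f x)
    (hU : U ∈ Module.End.eigenspace f a) (hW : W ∈ Module.End.eigenspace f b) :
    U * W - W * U ∈ Module.End.eigenspace f (-(a * b)) := by
  rw [Module.End.mem_eigenspace_iff] at hU hW ⊢
  rw [map_sub, map_mul_rev, map_mul_rev, hU, hW, ← neg_sub, commutator_smul_smul, neg_smul]

end Eigenspaces

section QuatSubmodule

variable {R M : Type*} [CommRing R] [AddCommGroup M] [Module R M] {Q : QuadraticForm R M}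

variable (Q) in
/-- The submodule of quaternion type `j` of a Clifford algebra over an arbitrary commutative ring.
The exponent `j(j-1)/2` is written `j.choose 2`, and `j` ranges over all natural numbers although
only its residue modulo `4` matters. -/
def quatSubmodule (j : ℕ) : Submodule R (CliffordAlgebra Q) :=
  Module.End.eigenspace involute.toLinearMap ((-1) ^ j) ⊓
    Module.End.eigenspace reverse ((-1) ^ j.choose 2)

theorem mem_quatSubmodule_iff_mem_quatType {V : Type*} [AddCommGroup V] [Module ℝ V]
    {Q : QuadraticForm ℝ V} {j : ℕ} {U : CliffordAlgebra Q} :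
    U ∈ quatSubmodule Q j ↔ U ∈ quatType Q j := by
  rw [quatSubmodule, Nat.choose_two_right, Submodule.mem_inf, Module.End.mem_eigenspace_iff,
    Module.End.mem_eigenspace_iff, AlgHom.toLinearMap_apply, quatType, Set.mem_ofPred_eq]

theorem quatSubmodule_eq_of_modEq_four {j k : ℕ} (h : j ≡ k [MOD 4]) :
    quatSubmodule Q j = quatSubmodule Q k := by
  rw [quatSubmodule, quatSubmodule, neg_one_pow_eq_of_modEq_two (h.of_dvd (by decide)),
    neg_one_pow_choose_two_eq_of_modEq_four h]

theorem commutator_mem_quatSubmodule {j k : ℕ} {U W : CliffordAlgebra Q}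
    (hU : U ∈ quatSubmodule Q j) (hW : W ∈ quatSubmodule Q k) :
    U * W - W * U ∈ quatSubmodule Q (j + k + 2 * (j * k + 1)) := by
  rw [quatSubmodule, neg_one_pow_choose_two_commutator, pow_add _ (j + k), pow_add,
    (even_two_mul _).neg_one_pow, mul_one]
  exact ⟨commutator_mem_eigenspace_of_algHom involute hU.1 hW.1,
    commutator_mem_eigenspace_of_map_mul_rev reverse.map_mul hU.2 hW.2⟩

theorem quatType_commutator_general {j k l : ℕ} (h : j + k + 2 * (j * k + 1) ≡ l [MOD 4])
    {U W : CliffordAlgebra Q} (hU : U ∈ quatSubmodule Q j) (hW : W ∈ quatSubmodule Q k) :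
    U * W - W * U ∈ quatSubmodule Q l :=
  quatSubmodule_eq_of_modEq_four (Q := Q) h ▸ commutator_mem_quatSubmodule hU hW

end QuatSubmodule

/-- Commutator inclusions between the subspaces of quaternion type:
`[j̄, j̄] ⊆ 2̄`, `[j̄, 2̄] ⊆ j̄`, `[0̄, 1̄] ⊆ 3̄`, `[0̄, 3̄] ⊆ 1̄`, `[1̄, 3̄] ⊆ 0̄`. -/
theorem quatType_commutator {V : Type*} [AddCommGroup V] [Module ℝ V]
    (Q : QuadraticForm ℝ V) :
    (∀ j : Fin 4, ∀ U ∈ quatType Q j, ∀ W ∈ quatType Q j,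
        U * W - W * U ∈ quatType Q 2) ∧
    (∀ j : Fin 4, ∀ U ∈ quatType Q j, ∀ W ∈ quatType Q 2,
        U * W - W * U ∈ quatType Q j) ∧
    (∀ U ∈ quatType Q 0, ∀ W ∈ quatType Q 1, U * W - W * U ∈ quatType Q 3) ∧
    (∀ U ∈ quatType Q 0, ∀ W ∈ quatType Q 3, U * W - W * U ∈ quatType Q 1) ∧
    (∀ U ∈ quatType Q 1, ∀ W ∈ quatType Q 3, U * W - W * U ∈ quatType Q 0) := by
  have self_index : ∀ j : Fin 4, (j + j + 2 * (j * j + 1) : ℕ) ≡ 2 [MOD 4] := by decide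
  have two_index : ∀ j : Fin 4, (j + 2 + 2 * (j * 2 + 1) : ℕ) ≡ j [MOD 4] := by decide
  simp only [← mem_quatSubmodule_iff_mem_quatType]
  exact ⟨fun j _ hU _ hW ↦ quatType_commutator_general (self_index j) hU hW,
    fun j _ hU _ hW ↦ quatType_commutator_general (two_index j) hU hW,
    fun _ hU _ hW ↦ quatType_commutator_general (by decide) hU hW,
    fun _ hU _ hW ↦ quatType_commutator_general (by decide) hU hW,
    fun _ hU _ hW ↦ quatType_commutator_general (by decide) hU hW⟩
end

section
/- Let Q be an arbitrary quadratic form on a real vector space V and let Cl(Q) be its Clifford algebra. Denote by j̄ (j = 0,1,2,3) the subspaces of quaternion type. Then for the anticommutator {U,V} := UV + VU the following inclusions hold: {j̄, j̄} ⊆ 0̄ for every j ∈ {0,1,2,3}; {j̄, 0̄} ⊆ j̄ for every j ∈ {0,1,2,3}; {1̄, 2̄} ⊆ 3̄; {2̄, 3̄} ⊆ 1̄; and {3̄, 1̄} ⊆ 2̄. (An inclusion {S,T} ⊆ W means: for all U ∈ S and V ∈ T, UV + VU ∈ W.) -/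
open CliffordAlgebra

/-!
The grade involution is multiplicative and the reversion is anti-multiplicative, so both preserve
anticommutators; hence the anticommutator of two joint eigenvectors is again one, and the
eigenvalues multiply. The eigenvalues `(-1) ^ j` and `(-1) ^ (j * (j - 1) / 2) = (-1) ^ (j / 2)`
record the last two binary digits of `j`, so multiplying them is bitwise exclusive or on types, and
all five families of inclusions are instances of `{ī, j̄} ⊆ k̄` with `k = i ^^^ j`.
-/

lemma choose_two_modEq_div_two (n : ℕ) : n.choose 2 ≡ n / 2 [MOD 2] := by
  have lucas : n.choose 2 ≡ (n % 2).choose 0 * (n / 2).choose 1 [MOD 2] :=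
    Choose.choose_modEq_choose_mod_mul_choose_div_nat
  rwa [Nat.choose_zero_right, Nat.choose_one_right, one_mul] at lucas

section Sign

variable {R : Type*} [Monoid R] [HasDistribNeg R]

lemma neg_one_pow_xor (m n : ℕ) : (-1 : R) ^ (m ^^^ n) = (-1) ^ m * (-1) ^ n := by
  have even_xor_iff : Even (m ^^^ n) ↔ Even (m + n) := by rw [Nat.even_xor, Nat.even_add]
  rw [← pow_add, neg_one_pow_congr even_xor_iff]

lemma neg_one_pow_mul_pred_div_two (n : ℕ) : (-1 : R) ^ (n * (n - 1) / 2) = (-1) ^ (n / 2) := by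
  rw [← Nat.choose_two_right]
  apply neg_one_pow_congr
  rw [Nat.even_iff, Nat.even_iff, choose_two_modEq_div_two n]

end Sign

lemma anticommutator_mem_eigenspace {R A : Type*} [CommRing R] [NonUnitalNonAssocRing A]
    [Module R A] [IsScalarTower R A A] [SMulCommClass R A A] {f : Module.End R A}
    (hf : ∀ x y, f (x * y + y * x) = f x * f y + f y * f x) {a b : R} {x y : A}
    (hx : x ∈ f.eigenspace a) (hy : y ∈ f.eigenspace b) :
    x * y + y * x ∈ f.eigenspace (a * b) := by
  rw [Module.End.mem_eigenspace_iff] at hx hy ⊢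
  calc
    f (x * y + y * x) = (a • x) * (b • y) + (b • y) * (a • x) := by rw [hf, hx, hy]
    _ = (a * b) • (x * y + y * x) := by
      rw [smul_mul_smul_comm, smul_mul_smul_comm, mul_comm b a, smul_add]

section CliffordAlgebra

variable {R M : Type*} [CommRing R] [AddCommGroup M] [Module R M] {Q : QuadraticForm R M}

lemma involute_anticommutator (U W : CliffordAlgebra Q) :
    involute (U * W + W * U) = involute U * involute W + involute W * involute U := by
  rw [map_add, map_mul, map_mul]

lemma reverse_anticommutator (U W : CliffordAlgebra Q) :
    reverse (U * W + W * U) = reverse U * reverse W + reverse W * reverse U := by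
  rw [map_add, reverse.map_mul, reverse.map_mul, add_comm]

variable (Q) in
/-- The subspace of quaternion type `j` over an arbitrary commutative ring, as a submodule: the
joint eigenspace of the grade involution and the reversion that `quatType` describes over `ℝ`.
The index is any natural number, although only its residue modulo 4 matters. -/
def quatTypeSubmodule (j : ℕ) : Submodule R (CliffordAlgebra Q) :=
  Module.End.eigenspace involute.toLinearMap ((-1) ^ j) ⊓
    Module.End.eigenspace reverse ((-1) ^ (j * (j - 1) / 2))

theorem quatType_anticommutator_general (i j : ℕ) {U W : CliffordAlgebra Q}
    (hU : U ∈ quatTypeSubmodule Q i) (hW : W ∈ quatTypeSubmodule Q j) :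
    U * W + W * U ∈ quatTypeSubmodule Q (i ^^^ j) := by
  obtain ⟨hU_inv, hU_rev⟩ := hU
  obtain ⟨hW_inv, hW_rev⟩ := hW
  have involute_sign : (-1 : R) ^ (i ^^^ j) = (-1) ^ i * (-1) ^ j := neg_one_pow_xor i j
  have reverse_sign : (-1 : R) ^ ((i ^^^ j) * ((i ^^^ j) - 1) / 2) =
      (-1) ^ (i * (i - 1) / 2) * (-1) ^ (j * (j - 1) / 2) := by
    simp only [neg_one_pow_mul_pred_div_two, Nat.xor_div_two, neg_one_pow_xor]
  rw [quatTypeSubmodule, involute_sign, reverse_sign]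
  exact ⟨anticommutator_mem_eigenspace involute_anticommutator hU_inv hW_inv,
    anticommutator_mem_eigenspace reverse_anticommutator hU_rev hW_rev⟩

end CliffordAlgebra

lemma quatType_eq_coe_quatTypeSubmodule {V : Type*} [AddCommGroup V] [Module ℝ V]
    (Q : QuadraticForm ℝ V) (j : ℕ) : quatType Q j = quatTypeSubmodule Q j := by
  ext U
  simp only [quatType, quatTypeSubmodule, Set.mem_ofPred_eq, SetLike.mem_coe, Submodule.mem_inf,
    Module.End.mem_eigenspace_iff, AlgHom.toLinearMap_apply]

/-- Anticommutator inclusions between the subspaces of quaternion type: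
`{j̄, j̄} ⊆ 0̄`, `{j̄, 0̄} ⊆ j̄`, `{1̄, 2̄} ⊆ 3̄`, `{2̄, 3̄} ⊆ 1̄`, `{3̄, 1̄} ⊆ 2̄`. -/
theorem quatType_anticommutator {V : Type*} [AddCommGroup V] [Module ℝ V]
    (Q : QuadraticForm ℝ V) :
    (∀ j : Fin 4, ∀ U ∈ quatType Q j, ∀ W ∈ quatType Q j,
        U * W + W * U ∈ quatType Q 0) ∧
    (∀ j : Fin 4, ∀ U ∈ quatType Q j, ∀ W ∈ quatType Q 0,
        U * W + W * U ∈ quatType Q j) ∧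
    (∀ U ∈ quatType Q 1, ∀ W ∈ quatType Q 2, U * W + W * U ∈ quatType Q 3) ∧
    (∀ U ∈ quatType Q 2, ∀ W ∈ quatType Q 3, U * W + W * U ∈ quatType Q 1) ∧
    (∀ U ∈ quatType Q 3, ∀ W ∈ quatType Q 1, U * W + W * U ∈ quatType Q 2) := by
  simp only [quatType_eq_coe_quatTypeSubmodule, SetLike.mem_coe]
  refine ⟨fun j U hU W hW => ?_, fun j U hU W hW => ?_,
    fun U hU W hW => quatType_anticommutator_general 1 2 hU hW,
    fun U hU W hW => quatType_anticommutator_general 2 3 hU hW,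
    fun U hU W hW => quatType_anticommutator_general 3 1 hU hW⟩
  · simpa only [Nat.xor_self] using quatType_anticommutator_general j j hU hW
  · simpa only [Nat.xor_zero] using quatType_anticommutator_general j 0 hU hW
end

section
/- Let n = p + q be even. Then the center of the real Clifford algebra Cl_{p,q} consists exactly of the scalar multiples of the identity: Cen(Cl_{p,q}) = {u·e : u ∈ ℝ}, i.e. the center equals the image of the algebra map ℝ → Cl_{p,q}. -/
open CliffordAlgebra

/-- The quadratic form of signature `(p, q)` on `ℝ^(p+q)`:
`Q(x) = x₁² + ⋯ + x_p² − x_{p+1}² − ⋯ − x_{p+q}²`. -/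
noncomputable def Qpq (p q : ℕ) : QuadraticForm ℝ (Fin (p + q) → ℝ) :=
  QuadraticMap.weightedSumSquares ℝ (fun i : Fin (p + q) => if (i : ℕ) < p then (1 : ℝ) else -1)

/-- The real Clifford algebra `Cl_{p,q}`. -/
noncomputable abbrev Cl (p q : ℕ) : Type := CliffordAlgebra (Qpq p q)

/-- The generators `e_a` of `Cl_{p,q}`. -/
noncomputable def gen (p q : ℕ) (i : Fin (p + q)) : Cl p q :=
  ι (Qpq p q) (Pi.single i 1)

/-!
Let `e₁, …, eₙ` be an orthogonal basis. For even `n` the volume element `ω = e₁ ⋯ eₙ` anticommutes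
with every `eᵢ`, so `ω * x = involute x * ω` for all `x`. If `x` is central, cancelling the unit `ω`
gives `involute x = x`, hence `eᵢ * x = involute x * eᵢ` for every `i`. Such an `x` is a scalar:
writing `x = a + eᵢ * b` with `a` and `b` in the subalgebra generated by the other basis vectors,
the relation reads `2 Q(eᵢ) b = 0`, so `eᵢ` does not occur in `x`.
-/

section TwistedCentralizer

variable {R M : Type*} [CommRing R] [AddCommGroup M] [Module R M] {Q : QuadraticForm R M}

/-- The twisted centralizer of `c`: the elements that `c` intertwines with their grade involution.
The involution is put on the left factor, so that for a vector `c = ι Q v` these are the elements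
supercommuting with `v`. -/
def twistedCentralizer (c : CliffordAlgebra Q) : Subalgebra R (CliffordAlgebra Q) where
  carrier := {x | c * x = involute x * c}
  mul_mem' {x y} (hx : c * x = involute x * c) (hy : c * y = involute y * c) := by
    rw [Set.mem_ofPred_eq, ← mul_assoc, hx, mul_assoc, hy, ← mul_assoc, map_mul]
  add_mem' {x y} (hx : c * x = involute x * c) (hy : c * y = involute y * c) := by
    rw [Set.mem_ofPred_eq, mul_add, hx, hy, map_add, add_mul]
  algebraMap_mem' r := by
    rw [Set.mem_ofPred_eq, AlgHom.commutes, Algebra.commutes]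

theorem mem_twistedCentralizer {c x : CliffordAlgebra Q} :
    x ∈ twistedCentralizer c ↔ c * x = involute x * c :=
  Iff.rfl

theorem ι_mem_twistedCentralizer {c : CliffordAlgebra Q} {v : M} :
    ι Q v ∈ twistedCentralizer c ↔ c * ι Q v = -(ι Q v * c) := by
  rw [mem_twistedCentralizer, involute_ι, neg_mul]

theorem adjoin_ι_image_eq_top {s : Set M} (hs : Submodule.span R s = ⊤) :
    Algebra.adjoin R (ι Q '' s) = ⊤ := by
  rw [← Algebra.adjoin_span, ← Submodule.map_span, hs, Submodule.map_top, LinearMap.coe_range,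
    adjoin_range_ι]

theorem involute_mem_adjoin_ι_image {s : Set M} {a : CliffordAlgebra Q}
    (ha : a ∈ Algebra.adjoin R (ι Q '' s)) : involute a ∈ Algebra.adjoin R (ι Q '' s) := by
  suffices Algebra.adjoin R (ι Q '' s) ≤ (Algebra.adjoin R (ι Q '' s)).comap involute from this ha
  rw [Algebra.adjoin_le_iff]
  rintro _ ⟨w, hw, rfl⟩
  simpa using neg_mem (Algebra.subset_adjoin (R := R) (Set.mem_image_of_mem (ι Q) hw))

theorem adjoin_ι_image_le_twistedCentralizer {s : Set M} {v : M} (hv : ∀ w ∈ s, Q.IsOrtho v w) :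
    Algebra.adjoin R (ι Q '' s) ≤ twistedCentralizer (ι Q v) := by
  rw [Algebra.adjoin_le_iff]
  rintro _ ⟨w, hw, rfl⟩
  exact ι_mem_twistedCentralizer.2 (ι_mul_ι_comm_of_isOrtho (hv w hw))

theorem mul_ι_eq_ι_mul_involute {s : Set M} {v : M} (hv : ∀ w ∈ s, Q.IsOrtho v w)
    {a : CliffordAlgebra Q} (ha : a ∈ Algebra.adjoin R (ι Q '' s)) :
    a * ι Q v = ι Q v * involute a := by
  have h := adjoin_ι_image_le_twistedCentralizer hv (involute_mem_adjoin_ι_image ha)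
  rw [mem_twistedCentralizer.1 h, involute_involute]

theorem exists_eq_add_ι_mul_of_mem_adjoin_insert {s : Set M} {v : M}
    (hv : ∀ w ∈ s, Q.IsOrtho v w) {x : CliffordAlgebra Q}
    (hx : x ∈ Algebra.adjoin R (ι Q '' insert v s)) :
    ∃ a ∈ Algebra.adjoin R (ι Q '' s), ∃ b ∈ Algebra.adjoin R (ι Q '' s), x = a + ι Q v * b := by
  induction hx using Algebra.adjoin_induction with
  | mem x hx =>
    obtain ⟨w, rfl | hw, rfl⟩ := hx
    · exact ⟨0, zero_mem _, 1, one_mem _, by simp⟩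
    · exact ⟨ι Q w, Algebra.subset_adjoin ⟨w, hw, rfl⟩, 0, zero_mem _, by simp⟩
  | algebraMap r => exact ⟨algebraMap R _ r, algebraMap_mem _ r, 0, zero_mem _, by simp⟩
  | add x y _ _ hx hy =>
    obtain ⟨a, ha, b, hb, rfl⟩ := hx
    obtain ⟨c, hc, d, hd, rfl⟩ := hy
    exact ⟨a + c, add_mem ha hc, b + d, add_mem hb hd, by rw [mul_add, add_add_add_comm]⟩
  | mul x y _ _ hx hy =>
    obtain ⟨a, ha, b, hb, rfl⟩ := hx
    obtain ⟨c, hc, d, hd, rfl⟩ := hy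
    have ha' := involute_mem_adjoin_ι_image ha
    have hb' := involute_mem_adjoin_ι_image hb
    refine ⟨a * c + Q v • (involute b * d),
      add_mem (mul_mem ha hc) (Subalgebra.smul_mem _ (mul_mem hb' hd) _),
      b * c + involute a * d, add_mem (mul_mem hb hc) (mul_mem ha' hd), ?_⟩
    have had : a * (ι Q v * d) = ι Q v * (involute a * d) := by
      rw [← mul_assoc, mul_ι_eq_ι_mul_involute hv ha, mul_assoc]
    have hbd : ι Q v * b * (ι Q v * d) = Q v • (involute b * d) := by
      rw [mul_assoc, ← mul_assoc b, mul_ι_eq_ι_mul_involute hv hb, mul_assoc, ← mul_assoc,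
        ι_sq_scalar, Algebra.smul_def]
    rw [add_mul, mul_add, mul_add, had, hbd, mul_add, mul_assoc]
    abel

theorem mem_adjoin_of_mem_adjoin_insert (h2 : IsUnit (2 : R)) {s : Set M} {v : M}
    (hv : ∀ w ∈ s, Q.IsOrtho v w) (hQv : IsUnit (Q v)) {x : CliffordAlgebra Q}
    (hx : x ∈ Algebra.adjoin R (ι Q '' insert v s)) (hvx : x ∈ twistedCentralizer (ι Q v)) :
    x ∈ Algebra.adjoin R (ι Q '' s) := by
  obtain ⟨a, ha, b, hb, rfl⟩ := exists_eq_add_ι_mul_of_mem_adjoin_insert hv hx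
  have hva := mem_twistedCentralizer.1 (adjoin_ι_image_le_twistedCentralizer hv ha)
  have hvb := mem_twistedCentralizer.1 (adjoin_ι_image_le_twistedCentralizer hv hb)
  have h_neg : Q v • b = -(Q v • b) := by
    have h_vv : ι Q v * (ι Q v * b) = Q v • b := by
      rw [← mul_assoc, ι_sq_scalar, Algebra.smul_def]
    rw [mem_twistedCentralizer, mul_add, h_vv, map_add, map_mul, involute_ι, add_mul, ← hva,
      neg_mul, neg_mul, mul_assoc, ← hvb, h_vv] at hvx
    exact add_left_cancel hvx
  have hb0 : b = 0 := by
    rwa [eq_neg_iff_add_eq_zero, ← two_smul R, h2.smul_eq_zero, hQv.smul_eq_zero] at h_neg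
  rwa [hb0, mul_zero, add_zero]

theorem mem_bot_of_forall_mem_twistedCentralizer (h2 : IsUnit (2 : R)) {l : List M}
    (horth : l.Pairwise Q.IsOrtho) (hunit : ∀ v ∈ l, IsUnit (Q v)) {x : CliffordAlgebra Q}
    (hx : x ∈ Algebra.adjoin R (ι Q '' {v | v ∈ l}))
    (hlx : ∀ v ∈ l, x ∈ twistedCentralizer (ι Q v)) :
    x ∈ (⊥ : Subalgebra R (CliffordAlgebra Q)) := by
  induction l with
  | nil => simpa using hx
  | cons v l ih =>
    rw [List.pairwise_cons] at horth
    rw [List.forall_mem_cons] at hunit hlx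
    have h_insert : {w | w ∈ v :: l} = insert v {w | w ∈ l} := by
      ext w
      simp
    rw [h_insert] at hx
    exact ih horth.2 hunit.2
      (mem_adjoin_of_mem_adjoin_insert h2 horth.1 hunit.1 hx hlx.1) hlx.2

theorem ι_mul_prod_map_ι_of_mem {l : List M} (horth : l.Pairwise Q.IsOrtho) {v : M} (hv : v ∈ l) :
    ι Q v * (l.map (ι Q)).prod = -(involute (l.map (ι Q)).prod * ι Q v) := by
  induction l with
  | nil => simp at hv
  | cons w l ih =>
    rw [List.pairwise_cons] at horth
    rw [List.map_cons, List.prod_cons, map_mul, involute_ι, neg_mul, neg_mul, neg_neg, mul_assoc]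
    obtain rfl | hv := List.mem_cons.1 hv
    · have h_prod : (l.map (ι Q)).prod ∈ Algebra.adjoin R (ι Q '' {w | w ∈ l}) :=
        list_prod_mem fun _ ha ↦ Algebra.subset_adjoin (by simpa using ha)
      rw [mem_twistedCentralizer.1 (adjoin_ι_image_le_twistedCentralizer horth.1 h_prod)]
    · rw [ι_mul_ι_mul_of_isOrtho _ (horth.1 v hv).symm, ih horth.2 hv, mul_neg, neg_neg]

theorem twistedCentralizer_prod_map_ι_eq_top {l : List M} (horth : l.Pairwise Q.IsOrtho)
    (hspan : Submodule.span R {v | v ∈ l} = ⊤) (heven : Even l.length) :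
    twistedCentralizer (l.map (ι Q)).prod = ⊤ := by
  rw [eq_top_iff, ← adjoin_ι_image_eq_top hspan, Algebra.adjoin_le_iff]
  rintro _ ⟨v, hv, rfl⟩
  have h_anti := ι_mul_prod_map_ι_of_mem horth hv
  rw [involute_prod_map_ι, heven.neg_one_pow, one_smul] at h_anti
  exact ι_mem_twistedCentralizer.2 (neg_eq_iff_eq_neg.2 h_anti).symm

theorem isUnit_prod_map_ι {l : List M} (hunit : ∀ v ∈ l, IsUnit (Q v)) :
    IsUnit (l.map (ι Q)).prod :=
  List.prod_isUnit (by simpa using fun v hv ↦ isUnit_ι_of_isUnit Q (hunit v hv))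

theorem involute_eq_self_of_mem_center {l : List M} (horth : l.Pairwise Q.IsOrtho)
    (hunit : ∀ v ∈ l, IsUnit (Q v)) (hspan : Submodule.span R {v | v ∈ l} = ⊤)
    (heven : Even l.length) {x : CliffordAlgebra Q}
    (hx : x ∈ Subalgebra.center R (CliffordAlgebra Q)) : involute x = x := by
  have h_mem : x ∈ twistedCentralizer (l.map (ι Q)).prod := by
    simp only [twistedCentralizer_prod_map_ι_eq_top horth hspan heven, Algebra.mem_top]
  rw [mem_twistedCentralizer, Subalgebra.mem_center_iff.1 hx] at h_mem
  exact ((isUnit_prod_map_ι hunit).mul_right_cancel h_mem).symm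

theorem center_cliffordAlgebra_eq_bot (h2 : IsUnit (2 : R)) {l : List M}
    (horth : l.Pairwise Q.IsOrtho) (hunit : ∀ v ∈ l, IsUnit (Q v))
    (hspan : Submodule.span R {v | v ∈ l} = ⊤) (heven : Even l.length) :
    Subalgebra.center R (CliffordAlgebra Q) = ⊥ := by
  refine eq_bot_iff.2 fun x hx ↦ mem_bot_of_forall_mem_twistedCentralizer h2 horth hunit ?_ ?_
  · rw [adjoin_ι_image_eq_top hspan]
    exact Algebra.mem_top
  · intro v _
    rw [mem_twistedCentralizer, involute_eq_self_of_mem_center horth hunit hspan heven hx]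
    exact Subalgebra.mem_center_iff.1 hx _

theorem center_of_even_general {κ : Type*} [Fintype κ] (h2 : IsUnit (2 : R)) {e : κ → M}
    (horth : Pairwise fun i j ↦ Q.IsOrtho (e i) (e j)) (hunit : ∀ i, IsUnit (Q (e i)))
    (hspan : Submodule.span R (Set.range e) = ⊤) (heven : Even (Fintype.card κ)) :
    {U : CliffordAlgebra Q | ∀ V : CliffordAlgebra Q, U * V = V * U} =
      Set.range (algebraMap R (CliffordAlgebra Q)) := by
  let l : List M := Finset.univ.toList.map e
  have h_set : {v | v ∈ l} = Set.range e := by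
    ext v
    simp [l]
  have h_orth : l.Pairwise Q.IsOrtho :=
    List.pairwise_map.2 ((Finset.nodup_toList _).imp fun hij ↦ horth hij)
  have h_center : Subalgebra.center R (CliffordAlgebra Q) = ⊥ :=
    center_cliffordAlgebra_eq_bot h2 h_orth (by simpa [l] using hunit) (by rwa [h_set])
      (by simpa [l] using heven)
  ext U
  rw [← Algebra.mem_bot, ← h_center, Subalgebra.mem_center_iff]
  exact forall_congr' fun V ↦ eq_comm

end TwistedCentralizer

section WeightedSumSquares

variable {R κ : Type*} [CommRing R] [Fintype κ] [DecidableEq κ]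

theorem weightedSumSquares_single_one (w : κ → R) (i : κ) :
    QuadraticMap.weightedSumSquares R w (Pi.single i 1) = w i := by
  simp [QuadraticMap.weightedSumSquares_apply, Pi.single_apply]

theorem weightedSumSquares_isOrtho_single (w : κ → R) {i j : κ} (hij : i ≠ j) (a b : R) :
    (QuadraticMap.weightedSumSquares R w).IsOrtho (Pi.single i a) (Pi.single j b) := by
  simp only [QuadraticMap.isOrtho_def, QuadraticMap.weightedSumSquares_apply, Pi.add_apply,
    ← Finset.sum_add_distrib, ← smul_add]
  refine Finset.sum_congr rfl fun k _ ↦ ?_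
  obtain rfl | hk := eq_or_ne k i
  · simp [hij]
  · simp [hk]

end WeightedSumSquares

theorem Qpq_isOrtho_basisFun (p q : ℕ) :
    Pairwise fun i j ↦ (Qpq p q).IsOrtho (Pi.basisFun ℝ _ i) (Pi.basisFun ℝ _ j) := by
  intro i j hij
  simpa only [Qpq, Pi.basisFun_apply] using weightedSumSquares_isOrtho_single _ hij 1 1

theorem isUnit_Qpq_basisFun (p q : ℕ) (i : Fin (p + q)) :
    IsUnit (Qpq p q (Pi.basisFun ℝ _ i)) := by
  rw [Qpq, Pi.basisFun_apply, weightedSumSquares_single_one]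
  split_ifs <;> simp

/-- If `n = p + q` is even, the center of `Cl_{p,q}` is exactly the set of real
scalar multiples of the identity, i.e. the range of the algebra map `ℝ → Cl_{p,q}`. -/
theorem center_of_even (p q : ℕ) (h : Even (p + q)) :
    {U : Cl p q | ∀ V : Cl p q, U * V = V * U} =
      Set.range (algebraMap ℝ (Cl p q)) := by
  exact center_of_even_general (IsUnit.mk0 2 two_ne_zero) (Qpq_isOrtho_basisFun p q)
    (isUnit_Qpq_basisFun p q) (Pi.basisFun ℝ _).span_eq (by rwa [Fintype.card_fin])
end

section
/- (Cartan's classification) Let n = p + q. Then there are isomorphisms of real associative unital algebras: Cl_{p,q} ≅ Mat(2^{n/2}, ℝ) if p − q ≡ 0 or 2 (mod 8); Cl_{p,q} ≅ Mat(2^{(n−1)/2}, ℝ) ⊕ Mat(2^{(n−1)/2}, ℝ) if p − q ≡ 1 (mod 8); Cl_{p,q} ≅ Mat(2^{(n−1)/2}, ℂ) if p − q ≡ 3 or 7 (mod 8); Cl_{p,q} ≅ Mat(2^{(n−2)/2}, ℍ) if p − q ≡ 4 or 6 (mod 8); Cl_{p,q} ≅ Mat(2^{(n−3)/2}, ℍ)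 ⊕ Mat(2^{(n−3)/2}, ℍ) if p − q ≡ 5 (mod 8). Here ℍ is the algebra of real quaternions, Mat(k, A) is the algebra of k×k matrices over A, and ⊕ is the direct product of algebras. -/
open CliffordAlgebra

/-!
If the Clifford algebra of `N` contains an even element `ω` that anticommutes with all vectors and
has an invertible scalar `u` as its square, then for `m` orthogonal to `N` the elements `ω m`
commute with `Cl(N)` and satisfy `(ω m)² = u m²`. Hence `Cl(N ⊥ u Q) ≃ Cl(N) ⊗ Cl(Q)` with the
ungraded tensor product. For the planes `⟨1, -1⟩`, `⟨1, 1⟩`, `⟨-1, -1⟩` and the product `ω` of their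
basis vectors this gives `Cl(p+1,q+1) ≃ M₂(ℝ) ⊗ Cl(p,q)`, `Cl(p+2,q) ≃ M₂(ℝ) ⊗ Cl(q,p)` and
`Cl(p,q+2) ≃ ℍ ⊗ Cl(q,p)`. Applying the third, the second, and the third backwards,
`Cl(p,q+4) ≃ ℍ ⊗ Cl(q+2,p) ≃ ℍ ⊗ M₂(ℝ) ⊗ Cl(p,q) ≃ M₂(ℝ) ⊗ Cl(q,p+2)`, so that no tensor product
`ℍ ⊗ ℍ` or `ℍ ⊗ ℂ` has to be computed. Every reduction thus strips a factor `M₂(ℝ)` and replaces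
`s = p - q mod 8` by `s` or `2 - s`, a reflection under which the list of types is symmetric; what
remains are the signatures `(0,0)`, `(1,0)`, `(0,1)`, `(0,2)` and `(0,3)`.
-/

open scoped TensorProduct Quaternion

section VolumeElement

variable {R V M A : Type*} [CommRing R] [AddCommGroup V] [Module R V] [AddCommGroup M] [Module R M]
  [Ring A] [Algebra R A]

theorem commute_algHom_of_commute_ι {Q : QuadraticForm R M} (f : CliffordAlgebra Q →ₐ[R] A) {a : A}
    (h : ∀ m, Commute (f (ι Q m)) a) (x : CliffordAlgebra Q) : Commute (f x) a := by
  induction x using CliffordAlgebra.induction with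
  | algebraMap r => simpa only [AlgHom.commutes] using Algebra.commute_algebraMap_left r a
  | ι m => exact h m
  | mul x y hx hy => simpa only [map_mul] using hx.mul_left hy
  | add x y hx hy => simpa only [map_add] using hx.add_left hy

/-- An even element `ω` of the Clifford algebra of `N` that anticommutes with all vectors and whose
square is the scalar `u`. If `N` is diagonal of even rank, the product of an orthogonal basis is
such an element. -/
structure IsVolumeElement (N : QuadraticForm R V) (ω : CliffordAlgebra N) (u : R) : Prop where
  mem_evenOdd_zero : ω ∈ evenOdd N 0
  mul_ι (v : V) : ω * ι N v = -(ι N v * ω)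
  mul_self : ω * ω = algebraMap R _ u

namespace IsVolumeElement

variable {N : QuadraticForm R V} {ω : CliffordAlgebra N} {u : Rˣ}

/-- The map `(v, m) ↦ v ⊗ 1 + ω ⊗ m`. Since `ω` anticommutes with `v`, its square is
`N v + u • Q m`. -/
noncomputable def toTensor (hω : IsVolumeElement N ω u) (Q : QuadraticForm R M) :
    CliffordAlgebra (N.prod ((u : R) • Q)) →ₐ[R] CliffordAlgebra N ⊗[R] CliffordAlgebra Q :=
  CliffordAlgebra.lift _ ⟨(Algebra.TensorProduct.includeLeft.toLinearMap ∘ₗ ι N).coprod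
    (TensorProduct.mk R _ _ ω ∘ₗ ι Q), fun ⟨v, m⟩ => by
      simp only [LinearMap.coprod_apply, LinearMap.comp_apply, AlgHom.toLinearMap_apply,
        Algebra.TensorProduct.includeLeft_apply, TensorProduct.mk_apply, add_mul, mul_add,
        Algebra.TensorProduct.tmul_mul_tmul, one_mul, mul_one, hω.mul_ι, hω.mul_self, ι_sq_scalar,
        TensorProduct.neg_tmul, Algebra.algebraMap_eq_smul_one, TensorProduct.tmul_smul,
        ← TensorProduct.smul_tmul', ← Algebra.TensorProduct.one_def, QuadraticMap.prod_apply,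
        _root_.smul_apply, smul_eq_mul]
      module⟩

theorem toTensor_ι (hω : IsVolumeElement N ω u) (Q : QuadraticForm R M) (v : V) (m : M) :
    hω.toTensor Q (ι _ (v, m)) = ι N v ⊗ₜ 1 + ω ⊗ₜ ι Q m :=
  lift_ι_apply _ _ _

theorem commute_map_inl_ι_inr (hω : IsVolumeElement N ω u) (Q : QuadraticForm R M) (m : M) :
    Commute (map (QuadraticMap.Isometry.inl N Q) ω) (ι (N.prod Q) (0, m)) := by
  simpa only [map_apply_ι, QuadraticMap.Isometry.inr_apply] using
    commute_map_mul_map_of_isOrtho_of_mem_evenOdd_zero_left (QuadraticMap.Isometry.inl N Q)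
      (QuadraticMap.Isometry.inr N Q) QuadraticMap.IsOrtho.inl_inr _ _
      hω.mem_evenOdd_zero (ι_mem_evenOdd_one Q m)

theorem map_inl_mul_ι_inr_mul_self (hω : IsVolumeElement N ω u) (Q : QuadraticForm R M) (m : M) :
    map (QuadraticMap.Isometry.inl N Q) ω * ι (N.prod Q) (0, m) *
      (map (QuadraticMap.Isometry.inl N Q) ω * ι (N.prod Q) (0, m)) =
      algebraMap R _ (u * Q m) := by
  rw [(hω.commute_map_inl_ι_inr Q m).symm.mul_mul_mul_comm, ← map_mul, hω.mul_self, ι_sq_scalar,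
    AlgHom.commutes, ← map_mul, QuadraticMap.prod_apply, map_zero, zero_add]

/-- The map `m ↦ u⁻¹ • ω m`. Its values commute with `N`, unlike the vectors `m` themselves. -/
noncomputable def ofRight (hω : IsVolumeElement N ω u) (Q : QuadraticForm R M) :
    CliffordAlgebra Q →ₐ[R] CliffordAlgebra (N.prod ((u : R) • Q)) :=
  CliffordAlgebra.lift _ ⟨(↑u⁻¹ : R) •
    LinearMap.mulLeft R (map (QuadraticMap.Isometry.inl N _) ω) ∘ₗ ι _ ∘ₗ LinearMap.inr R V M,
    fun m => by
      simp only [LinearMap.smul_apply, LinearMap.comp_apply, LinearMap.mulLeft_apply,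
        LinearMap.inr_apply]
      rw [smul_mul_smul_comm, hω.map_inl_mul_ι_inr_mul_self, Algebra.smul_def, ← map_mul]
      simp [mul_assoc]⟩

theorem ofRight_ι (hω : IsVolumeElement N ω u) (Q : QuadraticForm R M) (m : M) :
    hω.ofRight Q (ι Q m) =
      (↑u⁻¹ : R) • (map (QuadraticMap.Isometry.inl N ((u : R) • Q)) ω * ι _ (0, m)) :=
  lift_ι_apply _ _ _

theorem commute_map_inl_ofRight (hω : IsVolumeElement N ω u) (Q : QuadraticForm R M)
    (x : CliffordAlgebra N) (y : CliffordAlgebra Q) :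
    Commute (map (QuadraticMap.Isometry.inl N ((u : R) • Q)) x) (hω.ofRight Q y) := by
  refine commute_algHom_of_commute_ι _ (fun v => ?_) x
  refine (commute_algHom_of_commute_ι _ (fun m => ?_) y).symm
  rw [ofRight_ι]
  refine Commute.smul_left ?_ _
  have hωv := congrArg (map (QuadraticMap.Isometry.inl N ((u : R) • Q))) (hω.mul_ι v)
  simp only [map_mul, map_neg, map_apply_ι, QuadraticMap.Isometry.inl_apply] at hωv
  have hmv : ι (N.prod ((u : R) • Q)) (0, m) * ι _ (v, 0) = -(ι _ (v, 0) * ι _ (0, m)) :=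
    ι_mul_ι_comm_of_isOrtho (QuadraticMap.IsOrtho.inr_inl _ _)
  rw [map_apply_ι, QuadraticMap.Isometry.inl_apply, Commute, SemiconjBy, mul_assoc, hmv, mul_neg,
    ← mul_assoc, hωv, neg_mul, neg_neg, mul_assoc]

/-- The inverse of `toTensor`. -/
noncomputable def ofTensor (hω : IsVolumeElement N ω u) (Q : QuadraticForm R M) :
    CliffordAlgebra N ⊗[R] CliffordAlgebra Q →ₐ[R] CliffordAlgebra (N.prod ((u : R) • Q)) :=
  Algebra.TensorProduct.lift (map (QuadraticMap.Isometry.inl N _)) (hω.ofRight Q)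
    (hω.commute_map_inl_ofRight Q)

theorem toTensor_comp_map_inl (hω : IsVolumeElement N ω u) (Q : QuadraticForm R M) :
    (hω.toTensor Q).comp (map (QuadraticMap.Isometry.inl N _)) =
      Algebra.TensorProduct.includeLeft := by
  ext v
  simp [toTensor_ι]

theorem toTensor_comp_ofRight (hω : IsVolumeElement N ω u) (Q : QuadraticForm R M) :
    (hω.toTensor Q).comp (hω.ofRight Q) = Algebra.TensorProduct.includeRight := by
  ext m
  have hΩ := DFunLike.congr_fun (hω.toTensor_comp_map_inl Q) ω
  simp only [AlgHom.comp_apply, Algebra.TensorProduct.includeLeft_apply] at hΩ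
  simp [toTensor_ι, ofRight_ι, hΩ, hω.mul_self, Algebra.algebraMap_eq_smul_one,
    TensorProduct.smul_tmul', smul_smul]

/-- If `N` has a volume element with square `u`, then `Cl(N ⊥ u Q) ≃ Cl(N) ⊗ Cl(Q)`, with the
ungraded tensor product. -/
noncomputable def prodEquivTensor (hω : IsVolumeElement N ω u) (Q : QuadraticForm R M) :
    CliffordAlgebra (N.prod ((u : R) • Q)) ≃ₐ[R] CliffordAlgebra N ⊗[R] CliffordAlgebra Q :=
  AlgEquiv.ofAlgHom (hω.toTensor Q) (hω.ofTensor Q)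
    (by
      apply Algebra.TensorProduct.ext
      · ext v
        simp [ofTensor, toTensor_ι]
      · ext m
        simpa [ofTensor] using DFunLike.congr_fun (hω.toTensor_comp_ofRight Q) (ι Q m))
    (by
      ext v
      · simp [ofTensor, toTensor_ι]
      · simp [ofTensor, toTensor_ι, ofRight_ι, ← mul_assoc, ← map_mul, hω.mul_self,
          Algebra.algebraMap_eq_smul_one, smul_smul])

end IsVolumeElement

theorem isVolumeElement_quaternionBasis_k (c₁ c₂ : R) :
    IsVolumeElement (CliffordAlgebraQuaternion.Q c₁ c₂)
      (CliffordAlgebraQuaternion.quaternionBasis c₁ c₂).k (-(c₁ * c₂)) where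
  mem_evenOdd_zero := ι_mul_ι_mem_evenOdd_zero _ _ _
  mul_ι := fun ⟨a, b⟩ => by
    set B := CliffordAlgebraQuaternion.quaternionBasis c₁ c₂
    have hv : ι (CliffordAlgebraQuaternion.Q c₁ c₂) (a, b) = a • B.i + b • B.j := by
      simp [B, ← map_smul, ← map_add]
    simp [hv, mul_add, add_mul, add_comm]
  mul_self := by
    rw [QuaternionAlgebra.Basis.k_mul_k, map_neg, Algebra.algebraMap_eq_smul_one]

/-- A plane `⟨c₁, c₂⟩` splits off as a quaternion algebra, at the cost of scaling the rest of the
form by `-c₁ c₂`. -/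
noncomputable def quaternionTensorEquiv {c₁ c₂ : R} {u : Rˣ} (hu : (u : R) = -(c₁ * c₂))
    (Q : QuadraticForm R M) :
    CliffordAlgebra ((CliffordAlgebraQuaternion.Q c₁ c₂).prod ((u : R) • Q)) ≃ₐ[R]
      ℍ[R,c₁,0,c₂] ⊗[R] CliffordAlgebra Q :=
  have hk := hu ▸ isVolumeElement_quaternionBasis_k c₁ c₂
  (hk.prodEquivTensor Q).trans
    (Algebra.TensorProduct.congr CliffordAlgebraQuaternion.equiv AlgEquiv.refl)

end VolumeElement

section SplitAlgebras

/-- The matrices `i = diag(1, -1)` and `j = !![0, 1; c, 0]`. -/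
def matrixQuaternionBasis {R : Type*} [CommRing R] (c : R) :
    QuaternionAlgebra.Basis (Matrix (Fin 2) (Fin 2) R) (1 : R) 0 c where
  i := !![1, 0; 0, -1]
  j := !![0, 1; c, 0]
  k := !![0, 1; -c, 0]
  i_mul_i := by simp [Matrix.one_fin_two]
  j_mul_j := by simp [Matrix.one_fin_two, Matrix.smul_of]
  i_mul_j := by simp
  j_mul_i := by simp

theorem matrixQuaternionBasis_lift {R : Type*} [CommRing R] (c : R) (x : ℍ[R,1,0,c]) :
    (matrixQuaternionBasis c).lift x =
      !![x.re + x.imI, x.imJ + x.imK; c * (x.imJ - x.imK), x.re - x.imI] := by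
  ext i j
  fin_cases i <;> fin_cases j <;>
    simp [QuaternionAlgebra.Basis.lift, matrixQuaternionBasis, Matrix.algebraMap_matrix_apply,
      mul_comm c, sub_mul, ← sub_eq_add_neg]

variable {K : Type*} [Field K] [NeZero (2 : K)]

/-- A quaternion algebra with `i² = 1` is split. -/
def splitQuaternionEquiv {c : K} (hc : c ≠ 0) : ℍ[K,1,0,c] ≃ₐ[K] Matrix (Fin 2) (Fin 2) K where
  __ := (matrixQuaternionBasis c).liftHom
  invFun A := ⟨(A 0 0 + A 1 1) / 2, (A 0 0 - A 1 1) / 2, (A 0 1 + A 1 0 / c) / 2,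
    (A 0 1 - A 1 0 / c) / 2⟩
  left_inv x := by
    ext <;> simp only [AlgHom.toRingHom_eq_coe, RingHom.toMonoidHom_eq_coe,
      AlgHom.toRingHom_toMonoidHom, OneHom.toFun_eq_coe, MonoidHom.toOneHom_coe,
      MonoidHom.coe_coe, QuaternionAlgebra.Basis.liftHom_apply, matrixQuaternionBasis_lift,
      Matrix.of_apply, Matrix.cons_val', Matrix.cons_val_zero, Matrix.cons_val_one,
      Matrix.cons_val_fin_one] <;> field_simp <;> ring
  right_inv A := by
    change (matrixQuaternionBasis c).lift _ = A
    rw [matrixQuaternionBasis_lift, Matrix.eta_fin_two A]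
    congr! <;> simp only [Matrix.of_apply, Matrix.cons_val', Matrix.cons_val_zero,
      Matrix.cons_val_one, Matrix.cons_val_fin_one] <;> field_simp <;> ring

/-- The algebra map `(a, b) ↦ a e + b (1 - e)` defined by an idempotent `e`. -/
def idempotentHom {R A : Type*} [CommRing R] [Ring A] [Algebra R A] {e : A}
    (he : IsIdempotentElem e) : R × R →ₐ[R] A :=
  AlgHom.ofLinearMap
    ((LinearMap.toSpanSingleton R A e).coprod (LinearMap.toSpanSingleton R A (1 - e)))
    (by simp)
    (fun x y => by
      simp [mul_add, add_mul, he.eq, he.one_sub.eq, he.mul_one_sub_self, he.one_sub_mul_self,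
        smul_smul, mul_comm])

theorem idempotentHom_apply {R A : Type*} [CommRing R] [Ring A] [Algebra R A] {e : A}
    (he : IsIdempotentElem e) (x : R × R) : idempotentHom he x = x.1 • e + x.2 • (1 - e) :=
  rfl

theorem isIdempotentElem_half_one_add {A : Type*} [Ring A] [Algebra K A] {g : A}
    (hg : g * g = 1) : IsIdempotentElem ((2⁻¹ : K) • (1 + g)) := by
  have h : (1 + g) * (1 + g) = (2 : K) • (1 + g) := by
    rw [mul_add, add_mul, add_mul, hg, two_smul]
    noncomm_ring
  rw [IsIdempotentElem, smul_mul_smul_comm, h, smul_smul, inv_mul_cancel_right₀ two_ne_zero]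

/-- The map `Cl(⟨1⟩) → R × R` sending the generator to `(1, -1)`. -/
noncomputable def cliffordSqToProd (R : Type*) [CommRing R] :
    CliffordAlgebra (QuadraticMap.sq : QuadraticForm R R) →ₐ[R] R × R :=
  CliffordAlgebra.lift _ ⟨LinearMap.id.prod (-LinearMap.id), fun r => by ext <;> simp⟩

theorem cliffordSqToProd_ι {R : Type*} [CommRing R] (r : R) :
    cliffordSqToProd R (ι QuadraticMap.sq r) = (r, -r) :=
  lift_ι_apply _ _ _

/-- The Clifford algebra of the form `⟨1⟩` is split, by the idempotents `(1 ± e) / 2`. -/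
noncomputable def cliffordSqEquiv :
    CliffordAlgebra (QuadraticMap.sq : QuadraticForm K K) ≃ₐ[K] K × K :=
  AlgEquiv.ofAlgHom (cliffordSqToProd K)
    (idempotentHom (isIdempotentElem_half_one_add (K := K)
      (g := ι (QuadraticMap.sq : QuadraticForm K K) 1) (by simp)))
    (by
      ext x <;>
        simp only [AlgHom.comp_apply, idempotentHom_apply, map_add, map_sub, map_smul, map_one,
          cliffordSqToProd_ι, Prod.fst_add, Prod.snd_add, Prod.fst_sub, Prod.snd_sub,
          Prod.smul_fst, Prod.smul_snd, Prod.fst_one, Prod.snd_one, smul_eq_mul, AlgHom.id_apply]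
      all_goals field_simp
      all_goals ring)
    (by
      ext
      simp only [AlgHom.toLinearMap_apply, LinearMap.comp_apply, AlgHom.comp_apply,
        cliffordSqToProd_ι, idempotentHom_apply, AlgHom.id_apply]
      match_scalars <;> field_simp <;> ring)

end SplitAlgebras

section SignatureForm

variable {R M M₁ M₂ M₃ : Type*} [CommRing R] [AddCommGroup M] [Module R M] [AddCommGroup M₁]
  [Module R M₁] [AddCommGroup M₂] [Module R M₂] [AddCommGroup M₃] [Module R M₃]

/-- Associativity of the orthogonal sum. -/
def prodAssocIsometry (Q₁ : QuadraticForm R M₁) (Q₂ : QuadraticForm R M₂)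
    (Q₃ : QuadraticForm R M₃) :
    ((Q₁.prod Q₂).prod Q₃).IsometryEquiv (Q₁.prod (Q₂.prod Q₃)) where
  toLinearEquiv := LinearEquiv.prodAssoc R M₁ M₂ M₃
  map_app' _ := (add_assoc _ _ _).symm

/-- The diagonal form `⟨a, …, a⟩` of rank `n`. -/
def constForm (n : ℕ) (a : R) : QuadraticForm R (Fin n → R) :=
  QuadraticMap.weightedSumSquares R fun _ => a

theorem constForm_apply (n : ℕ) (a : R) (x : Fin n → R) :
    constForm n a x = ∑ i, a * (x i * x i) :=
  QuadraticMap.weightedSumSquares_apply _ _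

/-- Splitting off the line spanned by the first basis vector. -/
def constFormSuccIsometry (n : ℕ) (a : R) :
    (constForm (n + 1) a).IsometryEquiv ((a • QuadraticMap.sq).prod (constForm n a)) where
  toLinearEquiv := (Fin.consLinearEquiv R fun _ : Fin (n + 1) => R).symm
  map_app' x := by
    simp [constForm_apply, Fin.sum_univ_succ, Fin.tail]

/-- Splitting off the plane spanned by the first two basis vectors. -/
def constFormAddTwoProdIsometry (n : ℕ) (a : R) (Q : QuadraticForm R M) :
    ((constForm (n + 2) a).prod Q).IsometryEquiv
      ((CliffordAlgebraQuaternion.Q a a).prod ((constForm n a).prod Q)) :=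
  have hplane : (constForm (n + 2) a).IsometryEquiv
      ((CliffordAlgebraQuaternion.Q a a).prod (constForm n a)) :=
    ((constFormSuccIsometry (n + 1) a).trans
      ((QuadraticMap.IsometryEquiv.refl (a • QuadraticMap.sq)).prod
        (constFormSuccIsometry n a))).trans (prodAssocIsometry _ _ _).symm
  (hplane.prod (.refl Q)).trans (prodAssocIsometry _ _ _)

variable (R) in
/-- The form `p⟨1⟩ ⊥ q⟨-1⟩`. Over `ℝ` it is `Qpq p q`, with positive and negative coordinates in
separate factors. -/
def signatureForm (p q : ℕ) : QuadraticForm R ((Fin p → R) × (Fin q → R)) :=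
  (constForm p 1).prod (constForm q (-1))

/-- Separating the first `p` coordinates from the last `q`. -/
noncomputable def qpqIsometry (p q : ℕ) : (Qpq p q).IsometryEquiv (signatureForm ℝ p q) where
  toLinearEquiv := (LinearEquiv.funCongrLeft ℝ ℝ finSumFinEquiv).trans
    (LinearEquiv.sumArrowLequivProdArrow (Fin p) (Fin q) ℝ ℝ)
  map_app' x := by
    simp [Qpq, signatureForm, constForm_apply, QuadraticMap.weightedSumSquares_apply,
      Fin.sum_univ_add]

variable (R)

/-- A hyperbolic plane splits off. -/
def signatureFormSuccSuccIsometry (p q : ℕ) :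
    (signatureForm R (p + 1) (q + 1)).IsometryEquiv
      ((CliffordAlgebraQuaternion.Q 1 (-1)).prod ((1 : R) • signatureForm R p q)) :=
  (((constFormSuccIsometry p 1).prod (constFormSuccIsometry q (-1))).trans
    (QuadraticMap.IsometryEquiv.prodProdProdComm _ _ _ _)).trans
    (.prod (.refl (CliffordAlgebraQuaternion.Q 1 (-1)))
      { toLinearEquiv := .refl R _
        map_app' := fun x => by simp [signatureForm] })

/-- Negating a form exchanges the two parts of its signature. -/
def negSignatureFormIsometry (p q : ℕ) :
    ((constForm p (-1 : R)).prod (constForm q 1)).IsometryEquiv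
      ((-1 : R) • signatureForm R p q) where
  toLinearEquiv := .refl R _
  map_app' x := by simp [signatureForm, constForm_apply, add_comm]

/-- The plane `⟨1, 1⟩` splits off, the rest being written as a negated form. -/
def signatureFormAddTwoLeftIsometry (p q : ℕ) :
    (signatureForm R (p + 2) q).IsometryEquiv
      ((CliffordAlgebraQuaternion.Q 1 1).prod ((-1 : R) • signatureForm R q p)) :=
  have hswap : ((constForm p (1 : R)).prod (constForm q (-1))).IsometryEquiv
      ((-1 : R) • signatureForm R q p) :=
    (QuadraticMap.IsometryEquiv.prodComm _ _).trans (negSignatureFormIsometry R q p)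
  (constFormAddTwoProdIsometry p (1 : R) (constForm q (-1))).trans
    (.prod (.refl (CliffordAlgebraQuaternion.Q 1 1)) hswap)

/-- The plane `⟨-1, -1⟩` splits off, the rest being written as a negated form. -/
def signatureFormAddTwoRightIsometry (p q : ℕ) :
    (signatureForm R p (q + 2)).IsometryEquiv
      ((CliffordAlgebraQuaternion.Q (-1) (-1)).prod ((-1 : R) • signatureForm R q p)) :=
  have hswap : (signatureForm R p (q + 2)).IsometryEquiv
      ((constForm (q + 2) (-1)).prod (constForm p 1)) := .prodComm _ _
  (hswap.trans (constFormAddTwoProdIsometry q (-1 : R) (constForm p 1))).trans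
    (.prod (.refl (CliffordAlgebraQuaternion.Q (-1) (-1))) (negSignatureFormIsometry R q p))

end SignatureForm

section Recursion

variable (R K : Type*) [CommRing R] [Field K] [NeZero (2 : K)]

/-- `Cl(p+1, q+1) ≃ M₂ ⊗ Cl(p, q)`. -/
noncomputable def cliffordSuccSuccEquiv (p q : ℕ) :
    CliffordAlgebra (signatureForm K (p + 1) (q + 1)) ≃ₐ[K]
      Matrix (Fin 2) (Fin 2) K ⊗[K] CliffordAlgebra (signatureForm K p q) :=
  (equivOfIsometry (signatureFormSuccSuccIsometry K p q)).trans <|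
    (quaternionTensorEquiv (u := 1) (by simp) _).trans <|
    Algebra.TensorProduct.congr (splitQuaternionEquiv (by simp)) .refl

/-- `Cl(p+2, q) ≃ M₂ ⊗ Cl(q, p)`. -/
noncomputable def cliffordAddTwoLeftEquiv (p q : ℕ) :
    CliffordAlgebra (signatureForm K (p + 2) q) ≃ₐ[K]
      Matrix (Fin 2) (Fin 2) K ⊗[K] CliffordAlgebra (signatureForm K q p) :=
  (equivOfIsometry (signatureFormAddTwoLeftIsometry K p q)).trans <|
    (quaternionTensorEquiv (u := -1) (by simp) _).trans <|
    Algebra.TensorProduct.congr (splitQuaternionEquiv (by simp)) .refl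

/-- `Cl(p, q+2) ≃ ℍ ⊗ Cl(q, p)`. -/
noncomputable def cliffordAddTwoRightEquiv (p q : ℕ) :
    CliffordAlgebra (signatureForm R p (q + 2)) ≃ₐ[R]
      ℍ[R] ⊗[R] CliffordAlgebra (signatureForm R q p) :=
  (equivOfIsometry (signatureFormAddTwoRightIsometry R p q)).trans
    (quaternionTensorEquiv (u := -1) (by simp) _)

/-- `Cl(p, q+4) ≃ M₂ ⊗ Cl(q, p+2)`, by moving the factor `ℍ` of `Cl(p, q+4)` to the right and
absorbing it again. -/
noncomputable def cliffordAddFourRightEquiv (p q : ℕ) :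
    CliffordAlgebra (signatureForm K p (q + 4)) ≃ₐ[K]
      Matrix (Fin 2) (Fin 2) K ⊗[K] CliffordAlgebra (signatureForm K q (p + 2)) :=
  (cliffordAddTwoRightEquiv K p (q + 2)).trans <|
    (Algebra.TensorProduct.congr .refl (cliffordAddTwoLeftEquiv K q p)).trans <|
    (Algebra.TensorProduct.leftComm K _ _ _).trans <|
    Algebra.TensorProduct.congr .refl (cliffordAddTwoRightEquiv K q p).symm

/-- `Cl(0, 0)` is the base ring. -/
noncomputable def cliffordZeroZeroEquiv : CliffordAlgebra (signatureForm R 0 0) ≃ₐ[R] R :=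
  (equivOfIsometry
    { toLinearEquiv := LinearEquiv.ofSubsingleton _ _
      map_app' := fun x => by simp [signatureForm, constForm_apply] }).trans
  CliffordAlgebraRing.equiv

/-- `Cl(1, 0)` is split. -/
noncomputable def cliffordOneZeroEquiv : CliffordAlgebra (signatureForm K 1 0) ≃ₐ[K] K × K :=
  (equivOfIsometry
    { toLinearEquiv := LinearEquiv.prodUnique.trans (LinearEquiv.funUnique (Fin 1) K K)
      map_app' := fun x => by simp [signatureForm, constForm_apply] }).trans
  cliffordSqEquiv

/-- `Cl(0, 1)` is the field of complex numbers. -/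
noncomputable def cliffordZeroOneEquiv : CliffordAlgebra (signatureForm ℝ 0 1) ≃ₐ[ℝ] ℂ :=
  (equivOfIsometry
    { toLinearEquiv := LinearEquiv.uniqueProd.trans (LinearEquiv.funUnique (Fin 1) ℝ ℝ)
      map_app' := fun x => by
        simp [signatureForm, constForm_apply, CliffordAlgebraComplex.Q_apply] }).trans
  CliffordAlgebraComplex.equiv

/-- `Cl(0, 2)` is the quaternion algebra. -/
noncomputable def cliffordZeroTwoEquiv : CliffordAlgebra (signatureForm R 0 2) ≃ₐ[R] ℍ[R] :=
  (cliffordAddTwoRightEquiv R 0 0).trans <|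
    (Algebra.TensorProduct.congr .refl (cliffordZeroZeroEquiv R)).trans <|
    Algebra.TensorProduct.rid R R _

/-- `Cl(0, 3) ≃ ℍ ⊗ Cl(1, 0)` is a product of two quaternion algebras. -/
noncomputable def cliffordZeroThreeEquiv :
    CliffordAlgebra (signatureForm K 0 3) ≃ₐ[K] ℍ[K] × ℍ[K] :=
  (cliffordAddTwoRightEquiv K 0 1).trans <|
    (Algebra.TensorProduct.congr .refl (cliffordOneZeroEquiv K)).trans <|
    (Algebra.TensorProduct.prodRight K K ℍ[K] K K).trans <|
    (Algebra.TensorProduct.rid K K ℍ[K]).prodCongr (Algebra.TensorProduct.rid K K ℍ[K])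

end Recursion

section MatrixAlgebras

/-- Matrices over a product are pairs of matrices. -/
def matrixProdEquiv (R n A B : Type*) [CommRing R] [Fintype n] [DecidableEq n] [Ring A] [Ring B]
    [Algebra R A] [Algebra R B] : Matrix n n (A × B) ≃ₐ[R] Matrix n n A × Matrix n n B where
  __ := ((AlgHom.fst R A B).mapMatrix (m := n)).prod (AlgHom.snd R A B).mapMatrix
  invFun X := .of fun i j => (X.1 i j, X.2 i j)
  left_inv _ := rfl
  right_inv _ := rfl

/-- Matrices of size one over `A` are the algebra `A`. Unlike `Matrix.uniqueAlgEquiv`, this allows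
any `Fintype` and `DecidableEq` instances on the index type. -/
def matrixUniqueEquiv (R n A : Type*) [CommRing R] [Unique n] [Fintype n] [DecidableEq n] [Ring A]
    [Algebra R A] : Matrix n n A ≃ₐ[R] A where
  __ := Matrix.uniqueAddEquiv
  map_mul' X Y := by simp [Matrix.mul_apply]
  commutes' r := by simp [Matrix.algebraMap_matrix_apply]

/-- The Kronecker product. -/
def matrixTensorMatrixEquiv (R m n A : Type*) [CommRing R] [Fintype m] [DecidableEq m]
    [Fintype n] [DecidableEq n] [Ring A] [Algebra R A] :
    Matrix m m R ⊗[R] Matrix n n A ≃ₐ[R] Matrix (m × n) (m × n) A :=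
  (Matrix.kroneckerTMulAlgEquiv m n R R R A).trans (Algebra.TensorProduct.lid R A).mapMatrix

/-- The five families of algebras in the classification: matrix algebras over `ℝ`, `ℂ` or `ℍ`, and
products of two equal matrix algebras over `ℝ` or `ℍ`. -/
inductive CliffordType
  | real | realProd | complex | quaternion | quaternionProd
  deriving DecidableEq

namespace CliffordType

/-- The algebra whose matrix algebras form the family. A product of two matrix algebras is encoded
as matrices over a product. -/
def Carrier : CliffordType → Type
  | real => ℝ
  | realProd => ℝ × ℝ
  | complex => ℂ
  | quaternion => ℍ[ℝ]
  | quaternionProd => ℍ[ℝ] × ℍ[ℝ]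

noncomputable instance : ∀ t : CliffordType, Ring t.Carrier
  | real => inferInstanceAs (Ring ℝ)
  | realProd => inferInstanceAs (Ring (ℝ × ℝ))
  | complex => inferInstanceAs (Ring ℂ)
  | quaternion => inferInstanceAs (Ring ℍ[ℝ])
  | quaternionProd => inferInstanceAs (Ring (ℍ[ℝ] × ℍ[ℝ]))

noncomputable instance : ∀ t : CliffordType, Algebra ℝ t.Carrier
  | real => inferInstanceAs (Algebra ℝ ℝ)
  | realProd => inferInstanceAs (Algebra ℝ (ℝ × ℝ))
  | complex => inferInstanceAs (Algebra ℝ ℂ)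
  | quaternion => inferInstanceAs (Algebra ℝ ℍ[ℝ])
  | quaternionProd => inferInstanceAs (Algebra ℝ (ℍ[ℝ] × ℍ[ℝ]))

/-- The base-two logarithm of the real dimension of the carrier. -/
def exponent : CliffordType → ℕ
  | real => 0
  | realProd => 1
  | complex => 1
  | quaternion => 2
  | quaternionProd => 3

/-- `A` is isomorphic to the matrices of some size `2 ^ k` over the carrier of `t`, where `k` is
determined by requiring the dimension to be `2 ^ n`. -/
def IsMatrixAlgebra (t : CliffordType) (n : ℕ) (A : Type*) [Ring A] [Algebra ℝ A] : Prop :=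
  ∃ k, n = 2 * k + t.exponent ∧
    Nonempty (A ≃ₐ[ℝ] Matrix (Fin (2 ^ k)) (Fin (2 ^ k)) t.Carrier)

variable {t : CliffordType} {n : ℕ} {A B : Type*} [Ring A] [Algebra ℝ A] [Ring B] [Algebra ℝ B]

theorem IsMatrixAlgebra.congr (h : IsMatrixAlgebra t n A) (e : B ≃ₐ[ℝ] A) :
    IsMatrixAlgebra t n B :=
  h.imp fun _ ⟨hn, ⟨f⟩⟩ => ⟨hn, ⟨e.trans f⟩⟩

theorem IsMatrixAlgebra.of_algEquiv_carrier (e : A ≃ₐ[ℝ] t.Carrier) :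
    IsMatrixAlgebra t t.exponent A :=
  ⟨0, by simp, ⟨e.trans (matrixUniqueEquiv ℝ (Fin 1) t.Carrier).symm⟩⟩

theorem IsMatrixAlgebra.of_algEquiv_tensor (h : IsMatrixAlgebra t n A)
    (e : B ≃ₐ[ℝ] Matrix (Fin 2) (Fin 2) ℝ ⊗[ℝ] A) : IsMatrixAlgebra t (n + 2) B := by
  obtain ⟨k, rfl, ⟨f⟩⟩ := h
  refine ⟨k + 1, by ring, ⟨e.trans ?_⟩⟩
  exact (Algebra.TensorProduct.congr .refl f).trans <|
    (matrixTensorMatrixEquiv ℝ (Fin 2) (Fin (2 ^ k)) t.Carrier).trans <|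
    Matrix.reindexAlgEquiv ℝ t.Carrier
      (finProdFinEquiv.trans (finCongr (pow_succ' 2 k).symm))

theorem IsMatrixAlgebra.nonempty_algEquiv (h : IsMatrixAlgebra t n A) :
    Nonempty (A ≃ₐ[ℝ] Matrix (Fin (2 ^ ((n - t.exponent) / 2)))
      (Fin (2 ^ ((n - t.exponent) / 2))) t.Carrier) := by
  obtain ⟨k, rfl, f⟩ := h
  rwa [Nat.add_sub_cancel, Nat.mul_div_cancel_left k two_pos]

end CliffordType

/-- The type of `Cl(p, q)` as a function of `p - q` modulo 8, listed from `0` to `7`. -/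
def bottClock : ZMod 8 → CliffordType :=
  ![.real, .realProd, .real, .complex, .quaternion, .quaternionProd, .quaternion, .complex]

theorem bottClock_two_sub : ∀ s, bottClock (2 - s) = bottClock s := by decide

theorem bottClock_eq_of_add_eq_two {s r : ZMod 8} (h : s + r = 2) : bottClock s = bottClock r := by
  rw [← bottClock_two_sub, ← h, add_sub_cancel_left]

theorem isMatrixAlgebra_clifford_signatureForm : ∀ p q : ℕ,
    (bottClock (p - q)).IsMatrixAlgebra (p + q) (CliffordAlgebra (signatureForm ℝ p q))
  | 0, 0 => .of_algEquiv_carrier (t := .real) (cliffordZeroZeroEquiv ℝ)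
  | 1, 0 => .of_algEquiv_carrier (t := .realProd) (cliffordOneZeroEquiv ℝ)
  | 0, 1 => .of_algEquiv_carrier (t := .complex) cliffordZeroOneEquiv
  | 0, 2 => .of_algEquiv_carrier (t := .quaternion) (cliffordZeroTwoEquiv ℝ)
  | 0, 3 => .of_algEquiv_carrier (t := .quaternionProd) (cliffordZeroThreeEquiv ℝ)
  | p + 1, q + 1 => by
    convert (isMatrixAlgebra_clifford_signatureForm p q).of_algEquiv_tensor
      (cliffordSuccSuccEquiv ℝ p q) using 1
    · push_cast
      rw [add_sub_add_right_eq_sub]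
    · ring
  | p + 2, 0 => by
    convert (isMatrixAlgebra_clifford_signatureForm 0 p).of_algEquiv_tensor
      (cliffordAddTwoLeftEquiv ℝ p 0) using 1
    · apply bottClock_eq_of_add_eq_two
      push_cast
      ring
    · ring
  | 0, q + 4 => by
    convert (isMatrixAlgebra_clifford_signatureForm q 2).of_algEquiv_tensor
      (cliffordAddFourRightEquiv ℝ 0 q) using 1
    · apply bottClock_eq_of_add_eq_two
      have h8 : (8 : ZMod 8) = 0 := rfl
      push_cast
      linear_combination -h8
    · ring
termination_by p q => p + q

theorem nonempty_cl_algEquiv_matrix {p q : ℕ} {r : ℤ} {t : CliffordType}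
    (h : ((p : ℤ) - q) % 8 = r) (ht : bottClock r = t) :
    Nonempty (Cl p q ≃ₐ[ℝ] Matrix (Fin (2 ^ ((p + q - t.exponent) / 2)))
      (Fin (2 ^ ((p + q - t.exponent) / 2))) t.Carrier) := by
  have hr : (p - q : ZMod 8) = r := by
    rw [← h]
    exact_mod_cast (ZMod.intCast_mod ((p : ℤ) - q) 8).symm
  have hmat := isMatrixAlgebra_clifford_signatureForm p q
  rw [hr, ht] at hmat
  exact (hmat.congr (equivOfIsometry (qpqIsometry p q))).nonempty_algEquiv

end MatrixAlgebras

/-- Cartan's classification of the real Clifford algebras `Cl_{p,q}` (n = p + q),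
according to `p − q mod 8`. -/
theorem cartan_classification (p q : ℕ) (n : ℕ) (hn : n = p + q) :
    ((((p : ℤ) - q) % 8 = 0 ∨ ((p : ℤ) - q) % 8 = 2 →
      Nonempty (Cl p q ≃ₐ[ℝ]
        Matrix (Fin (2 ^ (n / 2))) (Fin (2 ^ (n / 2))) ℝ))) ∧
    ((((p : ℤ) - q) % 8 = 1 →
      Nonempty (Cl p q ≃ₐ[ℝ]
        (Matrix (Fin (2 ^ ((n - 1) / 2))) (Fin (2 ^ ((n - 1) / 2))) ℝ ×
         Matrix (Fin (2 ^ ((n - 1) / 2))) (Fin (2 ^ ((n - 1) / 2))) ℝ)))) ∧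
    ((((p : ℤ) - q) % 8 = 3 ∨ ((p : ℤ) - q) % 8 = 7 →
      Nonempty (Cl p q ≃ₐ[ℝ]
        Matrix (Fin (2 ^ ((n - 1) / 2))) (Fin (2 ^ ((n - 1) / 2))) ℂ))) ∧
    ((((p : ℤ) - q) % 8 = 4 ∨ ((p : ℤ) - q) % 8 = 6 →
      Nonempty (Cl p q ≃ₐ[ℝ]
        Matrix (Fin (2 ^ ((n - 2) / 2))) (Fin (2 ^ ((n - 2) / 2))) (Quaternion ℝ)))) ∧
    ((((p : ℤ) - q) % 8 = 5 →
      Nonempty (Cl p q ≃ₐ[ℝ]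
        (Matrix (Fin (2 ^ ((n - 3) / 2))) (Fin (2 ^ ((n - 3) / 2))) (Quaternion ℝ) ×
         Matrix (Fin (2 ^ ((n - 3) / 2))) (Fin (2 ^ ((n - 3) / 2))) (Quaternion ℝ))))) := by
  subst hn
  refine ⟨?_, fun h => ?_, ?_, ?_, fun h => ?_⟩
  · rintro (h | h) <;> exact nonempty_cl_algEquiv_matrix (t := .real) h rfl
  · exact (nonempty_cl_algEquiv_matrix (t := .realProd) h rfl).map
      (·.trans (matrixProdEquiv ℝ _ ℝ ℝ))
  · rintro (h | h) <;> exact nonempty_cl_algEquiv_matrix (t := .complex) h rfl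
  · rintro (h | h) <;> exact nonempty_cl_algEquiv_matrix (t := .quaternion) h rfl
  · exact (nonempty_cl_algEquiv_matrix (t := .quaternionProd) h rfl).map
      (·.trans (matrixProdEquiv ℝ _ ℍ[ℝ] ℍ[ℝ]))
end

section
/- For i = 1, 2 let (P_i, Q_i) be the exterior signature of the real Clifford algebra Cl_{p_i,q_i}. Then Cl_{p₁,q₁} and Cl_{p₂,q₂} are isomorphic as real associative unital algebras if and only if (P₁, Q₁) = (P₂, Q₂). -/
open CliffordAlgebra

/-- The basis element `e_A` of `Cl_{p,q}` attached to an ordered multi-index `A`: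
the product of the generators with indices in `A`, in increasing order (`e_∅ = 1`). -/
noncomputable def basisEl (p q : ℕ) (A : Finset (Fin (p + q))) : Cl p q :=
  ((A.sort (· ≤ ·)).map (gen p q)).prod


/-- The exterior signature `(P, Q)` of `Cl_{p,q}`: `P` is the number of ordered
multi-indices `A` with `(e_A)² = e` and `Q` the number with `(e_A)² = −e`. -/
noncomputable def extSig (p q : ℕ) : ℕ × ℕ :=
  ({A : Finset (Fin (p + q)) | basisEl p q A * basisEl p q A = 1}.ncard,
   {A : Finset (Fin (p + q)) | basisEl p q A * basisEl p q A = -1}.ncard)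

/-!
If `e : Cl p q ≃ₐ[ℝ] Cl p' q'`, then `e` carries the trace form `x ↦ tr (y ↦ x * x * y)` of one
algebra to that of the other. The monomials `e_A` are orthogonal for this form: flipping the sign of
a generator `e_i` is an automorphism, so `tr (e_A * e_B) = -tr (e_A * e_B)` once `i` lies in exactly
one of `A` and `B`. Hence the form is diagonal with entries `2 ^ (p + q) * e_A²`, and the exterior
signature is its signature, an isomorphism invariant by Sylvester's law of inertia.

Conversely, `P + Q = 2 ^ (p + q)` and, since `(-1) ^ (k.choose 2) = Re ((1 - i) * i ^ k)`,
`P - Q = Re ((1 - i) * (1 + i) ^ p * (1 - i) ^ q) = √2 ^ (p + q + 1) * cos ((p - q - 1) * π / 4)`.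
So equal exterior signatures force `p + q = p' + q'` and either `p ≡ p'` or `p + p' ≡ p + q + 1`
modulo `4`. Both cases are realised by multiplying generators by powers of a monomial
`ω = e_S` with `ω² = 1`: a single positive generator gives `Cl (p + 1) q ≃ Cl (q + 1) p`, and `4 k`
positive generators give `Cl (p + 4 k) q ≃ Cl p (q + 4 k)`.
-/

section OrderedProd

variable {ι M N : Type*} [LinearOrder ι]

/-- The product of `f i` over `i ∈ S`, in increasing order of the indices; for the generators `e_a`
of a Clifford algebra this is the monomial `e_S`. -/
def orderedProd [Monoid M] (f : ι → M) (S : Finset ι) : M :=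
  ((S.sort (· ≤ ·)).map f).prod

@[simp]
lemma orderedProd_empty [Monoid M] (f : ι → M) : orderedProd f ∅ = 1 := by
  simp [orderedProd]

lemma orderedProd_insert [Monoid M] (f : ι → M) {a : ι} {S : Finset ι} (ha : ∀ b ∈ S, a < b) :
    orderedProd f (insert a S) = f a * orderedProd f S := by
  have ha' : a ∉ S := fun h => lt_irrefl a (ha a h)
  simp [orderedProd, Finset.sort_insert (· ≤ ·) (fun b hb => (ha b hb).le) ha']

lemma orderedProd_congr [Monoid M] {f g : ι → M} {S : Finset ι} (h : ∀ i ∈ S, f i = g i) :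
    orderedProd f S = orderedProd g S := by
  rw [orderedProd, orderedProd, List.map_congr_left fun i hi => h i ((S.mem_sort _).1 hi)]

lemma map_orderedProd [Monoid M] [Monoid N] {F : Type*} [FunLike F M N] [MonoidHomClass F M N]
    (φ : F) (f : ι → M) (S : Finset ι) :
    φ (orderedProd f S) = orderedProd (fun i => φ (f i)) S := by
  simp only [orderedProd, map_list_prod, List.map_map, Function.comp_def]

variable {R A : Type*} [CommSemiring R] [Semiring A] [Algebra R A]

lemma orderedProd_smul (c : ι → R) (f : ι → A) (S : Finset ι) :
    orderedProd (fun i => c i • f i) S = (∏ i ∈ S, c i) • orderedProd f S := by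
  induction S using Finset.induction_on_min with
  | empty => simp
  | insert a S ha ih =>
    have ha' : a ∉ S := fun h => lt_irrefl a (ha a h)
    rw [orderedProd_insert _ ha, orderedProd_insert _ ha, Finset.prod_insert ha', ih,
      smul_mul_smul_comm]

lemma orderedProd_const_mul {ε : R} {u : A} {f : ι → A} {S : Finset ι}
    (h : ∀ i ∈ S, f i * u = ε • (u * f i)) :
    orderedProd (fun i => u * f i) S = ε ^ S.card.choose 2 • (u ^ S.card * orderedProd f S) := by
  induction S using Finset.induction_on_min with
  | empty => simp
  | insert a S ha ih =>
    have ha' : a ∉ S := fun h => lt_irrefl a (ha a h)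
    have hpow : f a * u ^ S.card = ε ^ S.card • (u ^ S.card * f a) := by
      have : SemiconjBy (f a) u (ε • u) := by
        rw [SemiconjBy, smul_mul_assoc, h a (Finset.mem_insert_self a S)]
      rw [this.pow_right, smul_pow, smul_mul_assoc]
    calc orderedProd (fun i => u * f i) (insert a S)
        = ε ^ S.card.choose 2 • (u * (f a * u ^ S.card) * orderedProd f S) := by
          rw [orderedProd_insert _ ha, ih fun i hi => h i (Finset.mem_insert_of_mem hi),
            mul_smul_comm]
          simp only [mul_assoc]
      _ = ε ^ (S.card + 1).choose 2 • (u ^ (S.card + 1) * (f a * orderedProd f S)) := by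
          rw [hpow, Nat.choose_succ_succ' S.card 1, Nat.choose_one_right, add_comm S.card, pow_add,
            mul_smul, pow_succ', mul_smul_comm, smul_mul_assoc]
          simp only [mul_assoc]
      _ = _ := by rw [Finset.card_insert_of_notMem ha', orderedProd_insert _ ha]

end OrderedProd

section CliffordFamily

variable {ι R A B : Type*} [CommRing R] [Ring A] [Algebra R A] [Ring B] [Algebra R B]

/-- The scalar `e_S²`, where `e_S` is the product over `S` of anticommuting elements with
squares `wᵢ`. -/
def monomialSq (w : ι → R) (S : Finset ι) : R :=
  (-1) ^ S.card.choose 2 * ∏ i ∈ S, w i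

/-- The defining relations of the generators of the Clifford algebra of `∑ wᵢ xᵢ²`: pairwise
anticommuting elements with squares `wᵢ`. -/
structure IsCliffordFamily (w : ι → R) (f : ι → A) : Prop where
  mul_self : ∀ i, f i * f i = algebraMap R A (w i)
  anticomm : Pairwise fun i j => f i * f j = -(f j * f i)

namespace IsCliffordFamily

variable {w : ι → R} {f : ι → A}

lemma smul (hf : IsCliffordFamily w f) (c : ι → R) :
    IsCliffordFamily (fun i => c i ^ 2 * w i) fun i => c i • f i where
  mul_self i := by
    rw [smul_mul_smul_comm, hf.mul_self, Algebra.smul_def, ← map_mul, sq]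
  anticomm i j hij := by
    beta_reduce
    rw [smul_mul_smul_comm, smul_mul_smul_comm, hf.anticomm hij, smul_neg, mul_comm]

lemma sum_smul_mul_self (hf : IsCliffordFamily w f) (x : ι → R) (s : Finset ι) :
    (∑ i ∈ s, x i • f i) * (∑ i ∈ s, x i • f i) = algebraMap R A (∑ i ∈ s, w i * (x i * x i)) := by
  classical
  induction s using Finset.induction_on with
  | empty => simp
  | insert a s ha ih =>
    have cross : x a • f a * ∑ i ∈ s, x i • f i = -((∑ i ∈ s, x i • f i) * x a • f a) := by
      rw [Finset.mul_sum, Finset.sum_mul, ← Finset.sum_neg_distrib]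
      refine Finset.sum_congr rfl fun i hi => ?_
      rw [smul_mul_smul_comm, smul_mul_smul_comm,
        hf.anticomm (show a ≠ i from fun h => ha (h ▸ hi)), smul_neg, mul_comm (x a)]
    have square : x a • f a * x a • f a = algebraMap R A (w a * (x a * x a)) := by
      rw [smul_mul_smul_comm, hf.mul_self, Algebra.smul_def, ← map_mul, mul_comm]
    rw [Finset.sum_insert ha, Finset.sum_insert ha, map_add, ← ih, ← square, add_mul, mul_add,
      mul_add, cross]
    abel

variable [LinearOrder ι]

lemma mul_orderedProd (hf : IsCliffordFamily w f) (i : ι) (S : Finset ι) :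
    f i * orderedProd f S = (-1 : R) ^ (S.erase i).card • (orderedProd f S * f i) := by
  induction S using Finset.induction_on_min with
  | empty => simp
  | insert a S ha ih =>
    have ha' : a ∉ S := fun h => lt_irrefl a (ha a h)
    rw [orderedProd_insert _ ha]
    obtain rfl | hai := eq_or_ne a i
    · rw [Finset.erase_eq_of_notMem ha'] at ih
      rw [Finset.erase_insert ha', mul_assoc, ← mul_smul_comm, ← ih]
    · rw [Finset.erase_insert_of_ne hai, Finset.card_insert_of_notMem (by simp [ha']), pow_succ,
        mul_neg_one, neg_smul, ← mul_assoc, hf.anticomm hai.symm, neg_mul, mul_assoc, ih,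
        mul_smul_comm, mul_assoc]

lemma orderedProd_mul_self (hf : IsCliffordFamily w f) (S : Finset ι) :
    orderedProd f S * orderedProd f S = algebraMap R A (monomialSq w S) := by
  unfold monomialSq
  induction S using Finset.induction_on_min with
  | empty => simp
  | insert a S ha ih =>
    have ha' : a ∉ S := fun h => lt_irrefl a (ha a h)
    have comm : orderedProd f S * f a = (-1 : R) ^ S.card • (f a * orderedProd f S) := by
      rw [hf.mul_orderedProd, Finset.erase_eq_of_notMem ha', smul_smul, ← mul_pow]
      simp
    calc orderedProd f (insert a S) * orderedProd f (insert a S)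
        = f a * (orderedProd f S * f a) * orderedProd f S := by
          rw [orderedProd_insert _ ha]; simp only [mul_assoc]
      _ = (-1 : R) ^ S.card • (f a * f a * (orderedProd f S * orderedProd f S)) := by
          rw [comm, mul_smul_comm, smul_mul_assoc]; simp only [mul_assoc]
      _ = _ := by
          rw [ih, hf.mul_self, ← map_mul, Algebra.smul_def, ← map_mul,
            Finset.card_insert_of_notMem ha', Finset.prod_insert ha',
            Nat.choose_succ_succ' S.card 1, Nat.choose_one_right, pow_add]
          congr 1
          ring

lemma mul_orderedProd_pow (hf : IsCliffordFamily w f) (i : ι) (S : Finset ι) (m : ℕ) :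
    f i * orderedProd f S ^ m =
      (-1 : R) ^ ((S.erase i).card * m) • (orderedProd f S ^ m * f i) := by
  have h : SemiconjBy (f i) (orderedProd f S)
      ((-1 : R) ^ (S.erase i).card • orderedProd f S) := by
    rw [SemiconjBy, hf.mul_orderedProd, smul_mul_assoc]
  rw [h.pow_right, smul_pow, ← pow_mul, smul_mul_assoc]

end IsCliffordFamily

/-- The family `ω ^ #(S \ {i}) * fᵢ` with `ω` the ordered product over `S`. If `ω² = 1`, this is
again a Clifford family, in which the weights `wᵢ` with `#(S \ {i})` odd have changed sign. -/
def twist [LinearOrder ι] (S : Finset ι) (f : ι → A) (i : ι) : A :=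
  orderedProd f S ^ (S.erase i).card * f i

lemma map_twist [LinearOrder ι] (φ : A →ₐ[R] B) (S : Finset ι) (f : ι → A) (i : ι) :
    φ (twist S f i) = twist S (fun j => φ (f j)) i := by
  simp only [twist, map_mul, map_pow, map_orderedProd]

/-- The weights of the Clifford family `twist S f`. -/
def twistWeight [LinearOrder ι] (S : Finset ι) (w : ι → R) (i : ι) : R :=
  (-1) ^ (S.erase i).card * w i

lemma twistWeight_of_mem [LinearOrder ι] {S : Finset ι} {i : ι} (hi : i ∈ S) (w : ι → R) :
    twistWeight S w i = (-1) ^ (S.card - 1) * w i := by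
  rw [twistWeight, Finset.card_erase_of_mem hi]

lemma twistWeight_of_notMem [LinearOrder ι] {S : Finset ι} {i : ι} (hi : i ∉ S) (w : ι → R) :
    twistWeight S w i = (-1) ^ S.card * w i := by
  rw [twistWeight, Finset.erase_eq_of_notMem hi]

lemma twistWeight_twistWeight [LinearOrder ι] (S : Finset ι) (w : ι → R) :
    twistWeight S (twistWeight S w) = w := by
  funext i
  rw [twistWeight, twistWeight, ← mul_assoc, ← mul_pow, neg_one_mul, neg_neg, one_pow, one_mul]

lemma prod_twistWeight [LinearOrder ι] (S : Finset ι) (w : ι → R) :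
    ∏ i ∈ S, twistWeight S w i = ∏ i ∈ S, w i := by
  rw [Finset.prod_congr rfl fun i hi => twistWeight_of_mem hi w, Finset.prod_mul_distrib,
    Finset.prod_const, ← pow_mul, mul_comm (_ - 1), (Nat.even_mul_pred_self _).neg_one_pow, one_mul]

namespace IsCliffordFamily

variable [LinearOrder ι] {w : ι → R} {f : ι → A} {S : Finset ι}

lemma orderedProd_pow_even (hf : IsCliffordFamily w f) (hS : Even (S.card.choose 2))
    (hw : ∏ i ∈ S, w i = 1) {n : ℕ} (hn : Even n) : orderedProd f S ^ n = 1 := by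
  obtain ⟨m, rfl⟩ := hn
  rw [← two_mul, pow_mul, sq, hf.orderedProd_mul_self, monomialSq, hw, hS.neg_one_pow, mul_one,
    map_one, one_pow]

lemma twist_mul_twist (hf : IsCliffordFamily w f) (i j : ι) :
    twist S f i * twist S f j = (-1 : R) ^ ((S.erase i).card * (S.erase j).card) •
      (orderedProd f S ^ ((S.erase i).card + (S.erase j).card) * (f i * f j)) := by
  rw [twist, twist, mul_assoc, ← mul_assoc (f i), hf.mul_orderedProd_pow, smul_mul_assoc,
    mul_smul_comm, pow_add]
  simp only [mul_assoc]

protected lemma twist (hf : IsCliffordFamily w f) (hS : Even (S.card.choose 2))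
    (hw : ∏ i ∈ S, w i = 1) : IsCliffordFamily (twistWeight S w) (twist S f) where
  mul_self i := by
    have sign : (-1 : R) ^ ((S.erase i).card * (S.erase i).card) = (-1) ^ (S.erase i).card := by
      obtain h | h := Nat.even_or_odd (S.erase i).card
      · rw [h.neg_one_pow, (h.mul_right _).neg_one_pow]
      · rw [h.neg_one_pow, (h.mul h).neg_one_pow]
    rw [hf.twist_mul_twist, sign, hf.orderedProd_pow_even hS hw (Even.add_self _), one_mul,
      hf.mul_self, twistWeight, map_mul, Algebra.smul_def]
  anticomm i j hij := by
    beta_reduce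
    rw [hf.twist_mul_twist, hf.twist_mul_twist, hf.anticomm hij, mul_comm, add_comm, mul_neg,
      smul_neg]

lemma orderedProd_twist (hf : IsCliffordFamily w f) (hS : Even (S.card.choose 2))
    (hw : ∏ i ∈ S, w i = 1) : orderedProd (twist S f) S = orderedProd f S := by
  have comm : ∀ i ∈ S, f i * orderedProd f S ^ (S.card - 1) =
      (-1 : R) ^ ((S.card - 1) * (S.card - 1)) • (orderedProd f S ^ (S.card - 1) * f i) := by
    intro i hi
    rw [hf.mul_orderedProd_pow, Finset.card_erase_of_mem hi]
  have even : Even ((S.card - 1) * S.card) := mul_comm S.card _ ▸ Nat.even_mul_pred_self S.card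
  rw [orderedProd_congr fun i hi => by rw [twist, Finset.card_erase_of_mem hi],
    orderedProd_const_mul comm, ← pow_mul, ← pow_mul, (hS.mul_left _).neg_one_pow, one_smul,
    hf.orderedProd_pow_even hS hw even, one_mul]

lemma twist_twist (hf : IsCliffordFamily w f) (hS : Even (S.card.choose 2))
    (hw : ∏ i ∈ S, w i = 1) : twist S (twist S f) = f := by
  funext i
  rw [twist, hf.orderedProd_twist hS hw, twist, ← mul_assoc, ← pow_add,
    hf.orderedProd_pow_even hS hw (Even.add_self _), one_mul]

end IsCliffordFamily

end CliffordFamily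

section WeightedSumSquares

open QuadraticMap (weightedSumSquares)

variable {ι R : Type*} [Fintype ι] [CommRing R]

section Generators

variable [DecidableEq ι] (w : ι → R)

/-- The generator `eᵢ` of the Clifford algebra of `∑ wᵢ xᵢ²`. -/
def generator (i : ι) : CliffordAlgebra (weightedSumSquares R w) :=
  CliffordAlgebra.ι _ (Pi.single i 1)

lemma isCliffordFamily_generator : IsCliffordFamily w (generator w) where
  mul_self i := by
    rw [generator, ι_sq_scalar]
    congr 1
    simp [Pi.single_apply]
  anticomm i j hij := by
    refine ι_mul_ι_comm_of_isOrtho ?_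
    rw [QuadraticMap.isOrtho_def]
    simp only [QuadraticMap.weightedSumSquares_apply, ← Finset.sum_add_distrib]
    refine Finset.sum_congr rfl fun k _ => ?_
    obtain rfl | hki := eq_or_ne k i
    · simp [hij]
    · simp [hki]

variable {w} {A : Type*} [Ring A] [Algebra R A]

lemma algHom_ext_generator {φ ψ : CliffordAlgebra (weightedSumSquares R w) →ₐ[R] A}
    (h : ∀ i, φ (generator w i) = ψ (generator w i)) : φ = ψ :=
  CliffordAlgebra.hom_ext <| LinearMap.pi_ext' fun i => LinearMap.ext_ring (h i)

/-- The algebra homomorphism out of the Clifford algebra of `∑ wᵢ xᵢ²` with prescribed values on the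
generators. -/
def IsCliffordFamily.lift {f : ι → A} (hf : IsCliffordFamily w f) :
    CliffordAlgebra (weightedSumSquares R w) →ₐ[R] A :=
  CliffordAlgebra.lift _ ⟨Fintype.linearCombination R f, fun x => by
    simpa [Fintype.linearCombination_apply] using hf.sum_smul_mul_self x Finset.univ⟩

@[simp]
lemma IsCliffordFamily.lift_generator {f : ι → A} (hf : IsCliffordFamily w f) (i : ι) :
    hf.lift (generator w i) = f i := by
  simp [lift, generator, CliffordAlgebra.lift_ι_apply]

end Generators

theorem nonempty_algEquiv_twistWeight [LinearOrder ι] {w : ι → R} {S : Finset ι}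
    (hS : Even (S.card.choose 2)) (hw : ∏ i ∈ S, w i = 1) :
    Nonempty (CliffordAlgebra (weightedSumSquares R w) ≃ₐ[R]
      CliffordAlgebra (weightedSumSquares R (twistWeight S w))) := by
  have hw' : ∏ i ∈ S, twistWeight S w i = 1 := (prod_twistWeight S w).trans hw
  have h := isCliffordFamily_generator w
  have h' := isCliffordFamily_generator (twistWeight S w)
  have h'' : IsCliffordFamily w (twist S (generator (twistWeight S w))) := by
    simpa only [twistWeight_twistWeight] using h'.twist hS hw'
  refine ⟨AlgEquiv.ofAlgHom h''.lift (h.twist hS hw).lift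
    (algHom_ext_generator fun i => ?_) (algHom_ext_generator fun i => ?_)⟩
  · simp [map_twist, h'.twist_twist hS hw']
  · simp [map_twist, h.twist_twist hS hw]

end WeightedSumSquares

section RegularTrace

variable (R A : Type*) [CommRing R] [Ring A] [Algebra R A]

/-- The trace of left multiplication. `Algebra.trace` assumes a commutative algebra, so it does not
apply to Clifford algebras. -/
noncomputable def regularTrace : A →ₗ[R] R :=
  LinearMap.trace R A ∘ₗ (Algebra.lmul R A).toLinearMap

/-- The trace pairing `(x, y) ↦ tr (x * y)` of the regular representation. -/
noncomputable def regularTraceBilin : LinearMap.BilinForm R A :=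
  (LinearMap.mul R A).compr₂ (regularTrace R A)

/-- The quadratic form `x ↦ tr (x * x)` of the regular representation, whose equivalence class is an
isomorphism invariant of the algebra. -/
noncomputable def regularTraceForm : QuadraticForm R A :=
  (regularTraceBilin R A).toQuadraticMap

variable {R A}

lemma regularTraceBilin_apply (x y : A) :
    regularTraceBilin R A x y = regularTrace R A (x * y) := rfl

lemma regularTraceForm_apply (x : A) : regularTraceForm R A x = regularTrace R A (x * x) := rfl

lemma regularTrace_mul_comm (x y : A) : regularTrace R A (x * y) = regularTrace R A (y * x) := by
  simp only [regularTrace, LinearMap.comp_apply, AlgHom.toLinearMap_apply, map_mul]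
  exact LinearMap.trace_mul_comm _ _ _

lemma regularTrace_algEquiv {B : Type*} [Ring B] [Algebra R B] (e : A ≃ₐ[R] B) (x : A) :
    regularTrace R B (e x) = regularTrace R A x := by
  have conj : Algebra.lmul R B (e x) = e.toLinearEquiv.conj (Algebra.lmul R A x) := by
    ext y
    simp [LinearEquiv.conj_apply]
  simp only [regularTrace, LinearMap.comp_apply, AlgHom.toLinearMap_apply, conj,
    LinearMap.trace_conj']

lemma regularTraceForm_equivalent {B : Type*} [Ring B] [Algebra R B] (e : A ≃ₐ[R] B) :
    (regularTraceForm R A).Equivalent (regularTraceForm R B) := by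
  refine ⟨{ e.toLinearEquiv with map_app' := fun x => ?_ }⟩
  change regularTraceForm R B (e x) = regularTraceForm R A x
  rw [regularTraceForm_apply, regularTraceForm_apply, ← map_mul, regularTrace_algEquiv]

end RegularTrace

section Finrank

variable {R M : Type*} [CommRing R] [Invertible (2 : R)] [AddCommGroup M] [Module R M]

/-- The basis of a Clifford algebra transported from the exterior algebra; its members need not be
products of vectors. -/
noncomputable def exteriorBasis {ι : Type*} [LinearOrder ι] (b : Module.Basis ι R M)
    (Q : QuadraticForm R M) : Module.Basis (Finset ι) R (CliffordAlgebra Q) :=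
  b.ExteriorAlgebra.map (equivExterior Q).symm

variable [Nontrivial R] [Module.Free R M] [Module.Finite R M]

instance finite_cliffordAlgebra (Q : QuadraticForm R M) : Module.Finite R (CliffordAlgebra Q) :=
  Module.Finite.of_basis (exteriorBasis (Module.finBasis R M) Q)

lemma finrank_cliffordAlgebra (Q : QuadraticForm R M) :
    Module.finrank R (CliffordAlgebra Q) = 2 ^ Module.finrank R M := by
  rw [Module.finrank_eq_card_basis (exteriorBasis (Module.finBasis R M) Q), Fintype.card_finset,
    Fintype.card_fin]

end Finrank

section TraceForm

open QuadraticMap (weightedSumSquares)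

section Ring

variable {ι R : Type*} [Fintype ι] [LinearOrder ι] [CommRing R]

lemma exists_algEquiv_orderedProd_generator (w : ι → R) (i : ι) :
    ∃ φ : CliffordAlgebra (weightedSumSquares R w) ≃ₐ[R] CliffordAlgebra (weightedSumSquares R w),
      ∀ S, φ (orderedProd (generator w) S) =
        (if i ∈ S then (-1 : R) else 1) • orderedProd (generator w) S := by
  let c : ι → R := Pi.mulSingle i (-1)
  have hc : ∀ j, c j ^ 2 = 1 := fun j => by
    obtain rfl | hj := eq_or_ne j i <;> simp [c, *]
  have h : IsCliffordFamily w fun j => c j • generator w j := by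
    simpa only [hc, one_mul] using (isCliffordFamily_generator w).smul c
  have involutive : h.lift.comp h.lift = AlgHom.id R _ :=
    algHom_ext_generator fun j => by simp [smul_smul, ← sq, hc]
  refine ⟨AlgEquiv.ofAlgHom h.lift h.lift involutive involutive, fun S => ?_⟩
  rw [AlgEquiv.ofAlgHom_apply, map_orderedProd]
  simp only [h.lift_generator]
  rw [orderedProd_smul, Finset.prod_pi_mulSingle']

end Ring

variable {ι K : Type*} [Fintype ι] [LinearOrder ι] [Field K] [Invertible (2 : K)] {w : ι → K}

lemma regularTrace_orderedProd_mul_orderedProd {S T : Finset ι} (h : S ≠ T) :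
    regularTrace K _ (orderedProd (generator w) S * orderedProd (generator w) T) = 0 := by
  obtain ⟨i, hi⟩ : ∃ i, ¬(i ∈ S ↔ i ∈ T) := by simpa [Finset.ext_iff] using h
  obtain ⟨φ, hφ⟩ := exists_algEquiv_orderedProd_generator w i
  have sign : (if i ∈ S then (-1 : K) else 1) * (if i ∈ T then -1 else 1) = -1 := by
    by_cases hS : i ∈ S <;> by_cases hT : i ∈ T <;> simp_all
  have neg := regularTrace_algEquiv φ (orderedProd (generator w) S * orderedProd (generator w) T)
  rw [map_mul, hφ, hφ, smul_mul_smul_comm, sign, map_smul, neg_one_smul] at neg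
  have : (2 : K) ≠ 0 := Invertible.ne_zero 2
  grind

lemma regularTrace_orderedProd_mul_self (S : Finset ι) :
    regularTrace K _ (orderedProd (generator w) S * orderedProd (generator w) S) =
      monomialSq w S * 2 ^ Fintype.card ι := by
  rw [(isCliffordFamily_generator w).orderedProd_mul_self, Algebra.algebraMap_eq_smul_one, map_smul,
    smul_eq_mul, regularTrace, LinearMap.comp_apply, AlgHom.toLinearMap_apply, map_one,
    LinearMap.trace_one, finrank_cliffordAlgebra, Module.finrank_fintype_fun_eq_card,
    Nat.cast_pow, Nat.cast_ofNat]

lemma linearIndependent_orderedProd_generator (hw : ∀ i, w i ≠ 0) :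
    LinearIndependent K (orderedProd (generator w)) := by
  refine LinearMap.BilinForm.linearIndependent_of_iIsOrtho
    (B := regularTraceBilin K _)
    (fun S T h => regularTrace_orderedProd_mul_orderedProd h) fun S => ?_
  rw [regularTraceBilin_apply, regularTrace_orderedProd_mul_self]
  simp [monomialSq, Finset.prod_ne_zero_iff, hw, Invertible.ne_zero]

/-- The monomials in the generators, as a basis of the Clifford algebra. -/
noncomputable def monomialBasis (hw : ∀ i, w i ≠ 0) :
    Module.Basis (Finset ι) K (CliffordAlgebra (weightedSumSquares K w)) :=
  basisOfLinearIndependentOfCardEqFinrank (linearIndependent_orderedProd_generator hw) <| by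
    rw [finrank_cliffordAlgebra, Module.finrank_fintype_fun_eq_card, Fintype.card_finset]

theorem regularTraceForm_equivalent_weightedSumSquares (hw : ∀ i, w i ≠ 0) :
    (regularTraceForm K (CliffordAlgebra (weightedSumSquares K w))).Equivalent
      (weightedSumSquares K fun S => monomialSq w S * 2 ^ Fintype.card ι) := by
  have hb : ∀ S, monomialBasis hw S = orderedProd (generator w) S := fun S => by
    simp [monomialBasis]
  have ortho : (QuadraticMap.associated (R := K) (regularTraceForm K _)).IsOrthoᵢ
      (monomialBasis hw) := fun S T h => by
    rw [Function.onFun, hb, hb, regularTraceForm, QuadraticMap.associated_left_inverse]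
    · exact regularTrace_orderedProd_mul_orderedProd h
    · exact regularTrace_mul_comm
  have diag : (fun S => regularTraceForm K _ (monomialBasis hw S)) =
      fun S => monomialSq w S * 2 ^ Fintype.card ι := funext fun S => by
    rw [hb, regularTraceForm_apply, regularTrace_orderedProd_mul_self]
  rw [← diag, ← QuadraticMap.basisRepr_eq_of_iIsOrtho _ _ ortho]
  exact ⟨QuadraticMap.isometryEquivBasisRepr _ _⟩

end TraceForm

section RealWeights

open QuadraticMap (weightedSumSquares)
open scoped Finset

lemma equivalent_weightedSumSquares_of_card_fiber_eq {ι κ R : Type*} [Fintype ι] [Fintype κ]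
    [CommRing R] [DecidableEq R] {w : ι → R} {v : κ → R}
    (h : ∀ c, #{i | w i = c} = #{j | v j = c}) :
    (weightedSumSquares R w).Equivalent (weightedSumSquares R v) := by
  let e : ι ≃ κ := Equiv.ofFiberEquiv (f := w) (g := v) fun c => Fintype.equivOfCardEq <| by
    rw [Fintype.card_subtype, Fintype.card_subtype, h c]
  have he : ∀ i, v (e i) = w i := Equiv.ofFiberEquiv_map _
  refine ⟨{ LinearEquiv.funCongrLeft R R e.symm with map_app' := fun x => ?_ }⟩
  simp [QuadraticMap.weightedSumSquares_apply, ← e.sum_comp, he, LinearMap.funLeft_apply]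

lemma card_fiber_of_eq_one_or_eq_neg_one {ι : Type*} [Fintype ι] {w : ι → ℝ}
    (hw : ∀ i, w i = 1 ∨ w i = -1) (c : ℝ) :
    #{i | w i = c} =
      if c = 1 then #{i | w i = 1}
      else if c = -1 then Fintype.card ι - #{i | w i = 1} else 0 := by
  split_ifs with h₁ h₂
  · rw [h₁]
  · classical
    rw [h₂, ← Finset.card_compl, Finset.compl_filter]
    congr 1
    refine Finset.filter_congr fun i _ => ?_
    obtain h | h := hw i <;> rw [h] <;> norm_num
  · refine Finset.card_eq_zero.2 (Finset.filter_eq_empty_iff.2 fun i _ hi => ?_)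
    exact (hw i).elim (fun h => h₁ (hi ▸ h)) fun h => h₂ (hi ▸ h)

/-- The diagonal coefficients of the quadratic form `Qpq p q`. -/
noncomputable def signs (p q : ℕ) (i : Fin (p + q)) : ℝ :=
  if (i : ℕ) < p then 1 else -1

lemma Qpq_eq_weightedSumSquares (p q : ℕ) : Qpq p q = weightedSumSquares ℝ (signs p q) := rfl

lemma signs_eq_one_or_eq_neg_one (p q : ℕ) (i : Fin (p + q)) :
    signs p q i = 1 ∨ signs p q i = -1 := by
  unfold signs
  split_ifs <;> simp

lemma card_signs_eq_one (p q : ℕ) : #{i | signs p q i = 1} = p := by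
  have h : ∀ i, signs p q i = 1 ↔ (i : ℕ) < p := fun i => by
    unfold signs
    split_ifs with hi <;> norm_num [hi]
  simp [h, Fin.card_filter_val_lt]

lemma card_signs_eq_neg_one (p q : ℕ) : #{i | signs p q i = -1} = q := by
  rw [card_fiber_of_eq_one_or_eq_neg_one (signs_eq_one_or_eq_neg_one p q), card_signs_eq_one,
    Fintype.card_fin, if_neg (by norm_num), if_pos rfl, Nat.add_sub_cancel_left]

lemma equivalent_Qpq {ι : Type*} [Fintype ι] {w : ι → ℝ} {p q : ℕ} (hw : ∀ i, w i = 1 ∨ w i = -1)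
    (hι : Fintype.card ι = p + q) (hp : #{i | w i = 1} = p) :
    (weightedSumSquares ℝ w).Equivalent (Qpq p q) := by
  rw [Qpq_eq_weightedSumSquares]
  refine equivalent_weightedSumSquares_of_card_fiber_eq fun c => ?_
  rw [card_fiber_of_eq_one_or_eq_neg_one hw,
    card_fiber_of_eq_one_or_eq_neg_one (signs_eq_one_or_eq_neg_one p q), hp, card_signs_eq_one, hι,
    Fintype.card_fin]

lemma nonempty_algEquiv_of_card_twistWeight {p q p' q' : ℕ} {S : Finset (Fin (p + q))}
    (hS : Even (S.card.choose 2)) (hpos : ∀ i ∈ S, signs p q i = 1) (hn : p + q = p' + q')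
    (hp : #{i | twistWeight S (signs p q) i = 1} = p') :
    Nonempty (Cl p q ≃ₐ[ℝ] Cl p' q') := by
  have sign : ∀ i, twistWeight S (signs p q) i = 1 ∨ twistWeight S (signs p q) i = -1 := by
    intro i
    unfold twistWeight
    obtain h | h := signs_eq_one_or_eq_neg_one p q i <;>
      obtain h' | h' := neg_one_pow_eq_or ℝ (S.erase i).card <;> simp [h, h']
  obtain ⟨e⟩ := nonempty_algEquiv_twistWeight hS (Finset.prod_eq_one hpos)
  obtain ⟨g⟩ := equivalent_Qpq sign (by rw [Fintype.card_fin, hn]) hp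
  exact ⟨e.trans (equivOfIsometry g)⟩

lemma nonempty_algEquiv_swap (p q : ℕ) : Nonempty (Cl (p + 1) q ≃ₐ[ℝ] Cl (q + 1) p) := by
  let i₀ : Fin (p + 1 + q) := ⟨0, by omega⟩
  have h₀ : signs (p + 1) q i₀ = 1 := if_pos p.succ_pos
  refine nonempty_algEquiv_of_card_twistWeight (S := {i₀}) (by simp) (by simpa using h₀)
    (by omega) ?_
  have pos : Finset.univ.filter (twistWeight {i₀} (signs (p + 1) q) · = 1) =
      insert i₀ (Finset.univ.filter (signs (p + 1) q · = -1)) := by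
    ext i
    obtain rfl | hi := eq_or_ne i i₀
    · simp [twistWeight_of_mem, h₀]
    · simp [twistWeight_of_notMem, hi, neg_eq_iff_eq_neg]
  rw [pos, Finset.card_insert_of_notMem (by norm_num [h₀]), card_signs_eq_neg_one]

lemma nonempty_algEquiv_shift (p q k : ℕ) :
    Nonempty (Cl (p + 4 * k) q ≃ₐ[ℝ] Cl p (q + 4 * k)) := by
  obtain ⟨S, hSpos, hS⟩ : ∃ S ⊆ Finset.univ.filter (signs (p + 4 * k) q · = 1), S.card = 4 * k :=
    Finset.exists_subset_card_eq (by rw [card_signs_eq_one]; omega)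
  have hSpos' : ∀ i ∈ S, signs (p + 4 * k) q i = 1 := fun i hi => by simpa using hSpos hi
  have even : Even (S.card.choose 2) := by
    rw [hS, Nat.choose_two_right, show 4 * k * (4 * k - 1) = 2 * (2 * (k * (4 * k - 1))) by ring,
      Nat.mul_div_cancel_left _ two_pos]
    exact even_two_mul _
  have pos : Finset.univ.filter (twistWeight S (signs (p + 4 * k) q) · = 1) =
      Finset.univ.filter (signs (p + 4 * k) q · = 1) \ S := by
    ext i
    by_cases hi : i ∈ S
    · have odd : Odd (4 * k - 1) := by
        have : 0 < S.card := Finset.card_pos.2 ⟨i, hi⟩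
        exact ⟨2 * k - 1, by omega⟩
      norm_num [twistWeight_of_mem hi, hi, hS, odd.neg_one_pow, hSpos' i hi]
    · have even : Even (4 * k) := ⟨2 * k, by ring⟩
      simp [twistWeight_of_notMem hi, hi, hS, even.neg_one_pow]
  refine nonempty_algEquiv_of_card_twistWeight even hSpos' (by omega) ?_
  rw [pos, Finset.card_sdiff_of_subset hSpos, card_signs_eq_one, hS, Nat.add_sub_cancel]

lemma nonempty_algEquiv_of_modEq {p q p' q' : ℕ} (hn : p + q = p' + q') (h : p ≡ p' [MOD 4]) :
    Nonempty (Cl p q ≃ₐ[ℝ] Cl p' q') := by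
  wlog hle : p' ≤ p generalizing p q p' q'
  · exact (this hn.symm h.symm (le_of_not_ge hle)).map AlgEquiv.symm
  obtain ⟨k, hk⟩ := (Nat.modEq_iff_dvd' hle).1 h.symm
  obtain rfl : p = p' + 4 * k := by omega
  obtain rfl : q' = q + 4 * k := by omega
  exact nonempty_algEquiv_shift p' q k

lemma nonempty_algEquiv_of_add_modEq {p q p' q' : ℕ} (hn : p + q = p' + q')
    (h : p + p' ≡ p + q + 1 [MOD 4]) : Nonempty (Cl p q ≃ₐ[ℝ] Cl p' q') := by
  have h' : q + 1 ≡ p' [MOD 4] := (Nat.ModEq.add_left_cancel' p h).symm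
  match p, p' with
  | p + 1, _ =>
    obtain ⟨e⟩ := nonempty_algEquiv_swap p q
    obtain ⟨e'⟩ := nonempty_algEquiv_of_modEq (p := q + 1) (q := p) (q' := q') (by omega) h'
    exact ⟨e.trans e'⟩
  | 0, p' + 1 =>
    obtain ⟨e⟩ := nonempty_algEquiv_swap p' q'
    obtain ⟨e'⟩ := nonempty_algEquiv_of_modEq (p := q' + 1) (q := p') (p' := 0) (q' := q)
      (by omega) (by unfold Nat.ModEq at *; omega)
    exact ⟨(e.trans e').symm⟩
  | 0, 0 => exact nonempty_algEquiv_of_modEq hn rfl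

end RealWeights

section ExteriorSignature

open QuadraticMap (weightedSumSquares)

lemma monomialSq_eq_one_or_eq_neg_one {ι R : Type*} [CommRing R] {w : ι → R}
    (hw : ∀ i, w i = 1 ∨ w i = -1) (S : Finset ι) : monomialSq w S = 1 ∨ monomialSq w S = -1 := by
  have prod : ∏ i ∈ S, w i = 1 ∨ ∏ i ∈ S, w i = -1 :=
    Finset.prod_induction w (fun c => c = 1 ∨ c = -1)
      (by rintro _ _ (rfl | rfl) (rfl | rfl) <;> simp) (Or.inl rfl) fun i _ => hw i
  unfold monomialSq
  obtain h | h := neg_one_pow_eq_or R (S.card.choose 2) <;>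
    obtain h' | h' := prod <;> simp [h, h']

lemma monomialSq_signs (p q : ℕ) (A : Finset (Fin (p + q))) :
    monomialSq (signs p q) A = 1 ∨ monomialSq (signs p q) A = -1 :=
  monomialSq_eq_one_or_eq_neg_one (signs_eq_one_or_eq_neg_one p q) A

lemma basisEl_mul_self (p q : ℕ) (A : Finset (Fin (p + q))) :
    basisEl p q A * basisEl p q A = algebraMap ℝ (Cl p q) (monomialSq (signs p q) A) :=
  (isCliffordFamily_generator (signs p q)).orderedProd_mul_self A

lemma extSig_eq_ncard_monomialSq (p q : ℕ) :
    extSig p q =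
      ({A | monomialSq (signs p q) A = 1}.ncard, {A | monomialSq (signs p q) A = -1}.ncard) := by
  have sq_eq_iff : ∀ (A : Finset (Fin (p + q))) (c : ℝ),
      basisEl p q A * basisEl p q A = algebraMap ℝ (Cl p q) c ↔ monomialSq (signs p q) A = c :=
    fun A c => by rw [basisEl_mul_self, (algebraMap ℝ (Cl p q)).injective.eq_iff]
  simp only [extSig, ← sq_eq_iff, map_neg, map_one]

theorem extSig_eq_sigPos_sigNeg (p q : ℕ) :
    extSig p q =
      (sigPos (regularTraceForm ℝ (Cl p q)), sigNeg (regularTraceForm ℝ (Cl p q))) := by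
  have diag : (regularTraceForm ℝ (Cl p q)).Equivalent (weightedSumSquares ℝ
      fun A => monomialSq (signs p q) A * 2 ^ Fintype.card (Fin (p + q))) :=
    regularTraceForm_equivalent_weightedSumSquares (w := signs p q) fun i => by
      obtain h | h := signs_eq_one_or_eq_neg_one p q i <;> norm_num [h]
  have two_pow_pos : (0 : ℝ) < 2 ^ Fintype.card (Fin (p + q)) := by positivity
  rw [extSig_eq_ncard_monomialSq, QuadraticForm.sigPos_of_equiv_weightedSumSquares diag,
    QuadraticForm.sigNeg_of_equiv_weightedSumSquares diag]
  congr! 4 with A A <;> obtain h | h := monomialSq_signs p q A <;>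
    norm_num [h, two_pow_pos, two_pow_pos.le]

theorem extSig_eq_of_algEquiv {p q p' q' : ℕ} (e : Cl p q ≃ₐ[ℝ] Cl p' q') :
    extSig p q = extSig p' q' := by
  have h := regularTraceForm_equivalent e
  rw [extSig_eq_sigPos_sigNeg, extSig_eq_sigPos_sigNeg, h.sigPos_eq, h.sigNeg_eq]

lemma extSig_fst_add_snd (p q : ℕ) : (extSig p q).1 + (extSig p q).2 = 2 ^ (p + q) := by
  have compl : {A | monomialSq (signs p q) A = -1} = {A | monomialSq (signs p q) A = 1}ᶜ := by
    ext A
    obtain h | h := monomialSq_signs p q A <;> norm_num [h]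
  rw [extSig_eq_ncard_monomialSq, compl, Set.ncard_add_ncard_compl]
  simp

lemma extSig_fst_sub_snd (p q : ℕ) :
    ((extSig p q).1 : ℝ) - (extSig p q).2 = ∑ A, monomialSq (signs p q) A := by
  have split : ∀ A, monomialSq (signs p q) A =
      (if monomialSq (signs p q) A = 1 then 1 else 0) -
        if monomialSq (signs p q) A = -1 then 1 else 0 := fun A => by
    obtain h | h := monomialSq_signs p q A <;> norm_num [h]
  rw [extSig_eq_ncard_monomialSq, Finset.sum_congr rfl fun A _ => split A,
    Finset.sum_sub_distrib]
  simp [Set.ncard_eq_toFinset_card']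

end ExteriorSignature

section SignSum

open Complex (I)
open scoped Real

lemma neg_one_pow_choose_two_eq_re (k : ℕ) :
    (-1 : ℝ) ^ k.choose 2 = ((1 - I) * I ^ k).re := by
  induction k using Nat.twoStepInduction with
  | zero => simp
  | one => simp
  | more k ih _ =>
    have choose : (k + 2).choose 2 = k.choose 2 + (2 * k + 1) := by
      rw [Nat.choose_succ_succ' (k + 1) 1, Nat.choose_succ_succ' k 1, Nat.choose_one_right,
        Nat.choose_one_right]
      ring
    rw [choose, pow_add, ih, (odd_two_mul_add_one k).neg_one_pow, pow_add I, Complex.I_sq,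
      mul_neg_one, mul_neg_one, mul_neg, Complex.neg_re]

lemma sum_monomialSq_eq_re {ι : Type*} [Fintype ι] (w : ι → ℝ) :
    ∑ S, monomialSq w S = ((1 - I) * ∏ i, (1 + w i * I)).re := by
  rw [Finset.prod_one_add, Finset.powerset_univ, Finset.mul_sum, Complex.re_sum]
  refine Finset.sum_congr rfl fun S _ => ?_
  rw [Finset.prod_mul_distrib, Finset.prod_const, mul_left_comm, ← Complex.ofReal_prod,
    Complex.re_ofReal_mul, ← neg_one_pow_choose_two_eq_re, monomialSq, mul_comm]

lemma one_add_mul_I_eq_exp {c : ℝ} (hc : c = 1 ∨ c = -1) :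
    1 + c * I = √2 * Complex.exp ((c * (π / 4) : ℝ) * I) := by
  have sqrt_mul : (√2 : ℝ) * (√2 / 2) = 1 := by
    rw [← mul_div_assoc, Real.mul_self_sqrt zero_le_two, div_self two_ne_zero]
  rw [Complex.exp_mul_I, ← Complex.ofReal_cos, ← Complex.ofReal_sin]
  obtain rfl | rfl := hc <;>
    simp [Real.cos_pi_div_four, Real.sin_pi_div_four, Complex.ext_iff, sqrt_mul, neg_mul]

lemma sum_monomialSq_eq_cos {ι : Type*} [Fintype ι] {w : ι → ℝ} (hw : ∀ i, w i = 1 ∨ w i = -1) :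
    ∑ S, monomialSq w S = √2 ^ (Fintype.card ι + 1) * Real.cos ((∑ i, w i - 1) * (π / 4)) := by
  have prod : ∏ i, (1 + w i * I) =
      √2 ^ Fintype.card ι * Complex.exp (((∑ i, w i) * (π / 4) : ℝ) * I) := by
    rw [Finset.prod_congr rfl fun i _ => one_add_mul_I_eq_exp (hw i), Finset.prod_mul_distrib,
      Finset.prod_const, Finset.card_univ, ← Complex.exp_sum, ← Finset.sum_mul,
      ← Complex.ofReal_sum, ← Finset.sum_mul]
  have one_sub_I : 1 - I = √2 * Complex.exp ((-1 * (π / 4) : ℝ) * I) := by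
    simpa [sub_eq_add_neg] using one_add_mul_I_eq_exp (c := -1) (Or.inr rfl)
  have polar : (1 - I) * ∏ i, (1 + w i * I) = (√2 ^ (Fintype.card ι + 1) : ℝ) *
      Complex.exp (((∑ i, w i - 1) * (π / 4) : ℝ) * I) := by
    rw [prod, one_sub_I, mul_mul_mul_comm, ← Complex.exp_add, ← add_mul, ← Complex.ofReal_add,
      ← add_mul, neg_add_eq_sub, Complex.ofReal_pow, pow_succ']
  rw [sum_monomialSq_eq_re, polar, Complex.re_ofReal_mul, Complex.exp_ofReal_mul_I_re]

end SignSum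

section Classification

open scoped Real

lemma sum_signs (p q : ℕ) : ∑ i, signs p q i = p - q := by
  simp [Fin.sum_univ_add, signs, sub_eq_add_neg]

theorem extSig_fst_sub_snd_eq_cos (p q : ℕ) :
    ((extSig p q).1 : ℝ) - (extSig p q).2 =
      √2 ^ (p + q + 1) * Real.cos ((p - q - 1) * (π / 4)) := by
  rw [extSig_fst_sub_snd, sum_monomialSq_eq_cos (signs_eq_one_or_eq_neg_one p q), sum_signs,
    Fintype.card_fin]

lemma add_eq_add_of_extSig_eq {p q p' q' : ℕ} (h : extSig p q = extSig p' q') :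
    p + q = p' + q' :=
  Nat.pow_right_injective le_rfl <| by
    simp only [← extSig_fst_add_snd, h]

lemma modEq_or_add_modEq_of_cos_eq {p q p' q' : ℕ} (hn : p + q = p' + q')
    (h : Real.cos ((p - q - 1) * (π / 4)) = Real.cos ((p' - q' - 1) * (π / 4))) :
    p ≡ p' [MOD 4] ∨ p + p' ≡ p + q + 1 [MOD 4] := by
  obtain ⟨k, hk⟩ := Real.cos_eq_cos_iff.1 h
  have angle : (p' - q' - 1 : ℝ) = 8 * k + (p - q - 1) ∨ (p' - q' - 1 : ℝ) = 8 * k - (p - q - 1) :=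
    hk.imp (fun hk => mul_right_cancel₀ (by positivity : π / 4 ≠ 0) (by linarith))
      fun hk => mul_right_cancel₀ (by positivity : π / 4 ≠ 0) (by linarith)
  have angle_int : (p' - q' - 1 : ℤ) = 8 * k + (p - q - 1) ∨
      (p' - q' - 1 : ℤ) = 8 * k - (p - q - 1) := mod_cast angle
  unfold Nat.ModEq
  omega

theorem modEq_or_add_modEq_of_extSig_eq {p q p' q' : ℕ} (h : extSig p q = extSig p' q') :
    p ≡ p' [MOD 4] ∨ p + p' ≡ p + q + 1 [MOD 4] := by
  have hn := add_eq_add_of_extSig_eq h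
  refine modEq_or_add_modEq_of_cos_eq hn (mul_left_cancel₀ (pow_ne_zero (p + q + 1)
    (Real.sqrt_ne_zero'.2 two_pos)) ?_)
  rw [← extSig_fst_sub_snd_eq_cos, h, extSig_fst_sub_snd_eq_cos, hn]

end Classification

/-- Two real Clifford algebras are isomorphic as real associative unital algebras
if and only if their exterior signatures coincide. -/
theorem iso_iff_extSig_eq (p₁ q₁ p₂ q₂ : ℕ) :
    Nonempty (Cl p₁ q₁ ≃ₐ[ℝ] Cl p₂ q₂) ↔ extSig p₁ q₁ = extSig p₂ q₂ := by
  refine ⟨fun ⟨e⟩ => extSig_eq_of_algEquiv e, fun h => ?_⟩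
  have hn := add_eq_add_of_extSig_eq h
  obtain h₄ | h₄ := modEq_or_add_modEq_of_extSig_eq h
  · exact nonempty_algEquiv_of_modEq hn h₄
  · exact nonempty_algEquiv_of_add_modEq hn h₄
end

section
/- (Generalized Pauli theorem, even case) Let n = p + q be even. Suppose γ₁,…,γ_n and β₁,…,β_n are two families of elements of Cl_{p,q} satisfying γ_a γ_b + γ_b γ_a = 2η_{ab}·e and β_a β_b + β_b β_a = 2η_{ab}·e for all a, b ∈ {1,…,n}, where η = diag(1,…,1,−1,…,−1) (p pluses, q minuses). Then there exists an invertible element T ∈ Cl_{p,q} such that γ_a = T^{−1} β_a T for all a = 1,…,n, and T is unique up to multiplication by a nonzero real scalar: if T' is invertible and also satisfies γ_a = T'^{−1} β_a T' for all a, then T' = λT for some λ ∈ ℝ, λ ≠ 0. -/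
open CliffordAlgebra

/-- The diagonal matrix `η = diag(1,…,1,−1,…,−1)` with `p` pluses and `q` minuses. -/
def etaPQ (p q : ℕ) (a b : Fin (p + q)) : ℝ :=
  if a = b then (if (a : ℕ) < p then 1 else -1) else 0

/-!
The maps `L_a x = β_a x γ_a⁻¹` are commuting involutions of the algebra, so they have a joint
eigenvector, with eigenvalues `±1`. Multiplying an eigenvector on the left by a monomial `β_B`
changes the eigenvalue of `L_a` by the sign `(-1) ^ |B|`, times `-1` if `a ∈ B`. When `n` is even
the `2 ^ n` sign patterns so obtained are pairwise distinct, hence exhaust `{±1} ^ n`. So some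
`T ≠ 0` is fixed by every `L_a`, and then the `β_B T` are joint eigenvectors with distinct
eigenvalues, i.e. a basis of the algebra. As `1` is a combination of the `β_B T`, the element `T`
has a left inverse; as `T` is the only basis vector fixed by all the `L_a`, it is unique up to
scalars.
-/

section CommutingEndomorphisms

variable {ι κ R M : Type*} [AddCommGroup M]

theorem exists_joint_eigenvector_of_involutive [Finite ι] [Nontrivial M] [Semiring R] [Module R M]
    {f : ι → Module.End R M} (hcomm : Pairwise fun i j => Commute (f i) (f j))
    (hinv : ∀ i, Function.Involutive (f i)) :
    ∃ x ≠ 0, ∃ s : ι → ℤˣ, ∀ i, f i x = s i • x := by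
  classical
  have := Fintype.ofFinite ι
  suffices H : ∀ t : Finset ι, ∃ x : M, x ≠ 0 ∧ ∀ i ∈ t, ∃ s : ℤˣ, f i x = s • x by
    obtain ⟨x, hx, h⟩ := H Finset.univ
    choose s hs using fun i => h i (Finset.mem_univ i)
    exact ⟨x, hx, s, hs⟩
  intro t
  induction t using Finset.induction_on with
  | empty => simpa using exists_ne (0 : M)
  | insert i t hi ih =>
    obtain ⟨x, hx, hs⟩ := ih
    by_cases hsum : x + f i x = 0
    · exact ⟨x, hx, Finset.forall_mem_insert .. |>.2
        ⟨⟨-1, by simpa using eq_neg_of_add_eq_zero_right hsum⟩, hs⟩⟩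
    · refine ⟨x + f i x, hsum, Finset.forall_mem_insert .. |>.2
        ⟨⟨1, by rw [map_add, hinv i x, one_smul, add_comm]⟩, fun j hj => ?_⟩⟩
      obtain ⟨s, hjs⟩ := hs j hj
      have hji : f j (f i x) = f i (f j x) :=
        LinearMap.congr_fun (hcomm (ne_of_mem_of_not_mem hj hi)) x
      exact ⟨s, by simp only [map_add, hji, hjs, smul_add, Units.smul_def, map_zsmul]⟩

theorem linearIndependent_of_joint_eigenvectors [CommRing R] [IsDomain R] [Module R M]
    [Module.IsTorsionFree R M] {f : ι → Module.End R M}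
    (hcomm : ∀ i j, Commute (f i) (f j)) {v : κ → M} (hv : ∀ k, v k ≠ 0) {χ : κ → ι → R}
    (hχ : Function.Injective χ) (hf : ∀ k i, f i (v k) = χ k i • v k) :
    LinearIndependent R v := by
  have hindep := Module.End.independent_iInf_maxGenEigenspace_of_forall_mapsTo f
    fun i j c => Module.End.mapsTo_maxGenEigenspace_of_comm (hcomm j i) c
  refine (hindep.comp hχ).linearIndependent _ (fun k => ?_) hv
  exact (Submodule.mem_iInf _).2 fun i =>
    ((f i).genEigenspace (χ k i)).mono le_top (Module.End.mem_eigenspace_iff.2 (hf k i))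

theorem eq_smul_of_joint_eigenvector [CommRing R] [IsDomain R] [Module R M]
    {f : ι → Module.End R M} (b : Module.Basis κ R M) {χ : κ → ι → R}
    (hχ : Function.Injective χ) (hf : ∀ k i, f i (b k) = χ k i • b k) {x : M} {k : κ}
    (hx : ∀ i, f i x = χ k i • x) : x = b.repr x k • b k := by
  have hrepr (i : ι) (l : κ) : b.repr (f i x) l = χ l i * b.repr x l := by
    have : b.coord l ∘ₗ f i = χ l i • b.coord l := b.ext fun m => by
      rcases eq_or_ne m l with rfl | hml <;> simp [*]
    exact LinearMap.congr_fun this x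
  refine b.ext_elem fun l => ?_
  rcases eq_or_ne k l with rfl | hkl
  · simp
  · obtain ⟨i, hi⟩ := Function.ne_iff.1 (hχ.ne hkl)
    have hcoeff : χ k i * b.repr x l = χ l i * b.repr x l := by
      rw [← hrepr, hx, map_smul, Finsupp.smul_apply, smul_eq_mul]
    have hzero : b.repr x l = 0 := (mul_eq_mul_right_iff.1 hcoeff).resolve_left hi
    simp [hzero, hkl]

end CommutingEndomorphisms

section CommSign

theorem intCast_units_injective {R : Type*} [Ring R] [NeZero (2 : R)] :
    Function.Injective fun s : ℤˣ => ((s : ℤ) : R) := by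
  have h2 : (2 : R) ≠ 0 := two_ne_zero
  have hne : (-1 : R) ≠ 1 := fun h => h2 <| by
    rw [← one_add_one_eq_two, ← neg_eq_iff_add_eq_zero, h]
  intro s t h
  rcases Int.units_eq_one_or s with rfl | rfl <;> rcases Int.units_eq_one_or t with rfl | rfl <;>
    simp_all [eq_comm]

variable {I : Type*} [DecidableEq I]

/-- The sign `σ` in `β_a β_B = σ β_B β_a`, where `β_B` is a product of pairwise anticommuting
elements `β_b`, one for each `b ∈ B`. -/
def commSign (B : Finset I) (a : I) : ℤˣ :=
  (-1) ^ B.card * if a ∈ B then -1 else 1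

variable [Fintype I]

theorem commSign_surjective (hn : Even (Fintype.card I)) :
    Function.Surjective (commSign : Finset I → I → ℤˣ) := by
  intro s
  let S : Finset I := {a | s a = -1}
  have mem_S (a : I) : a ∈ S ↔ s a = -1 := Finset.mem_filter_univ a
  rcases Nat.even_or_odd S.card with hS | hS
  · refine ⟨S, funext fun a => ?_⟩
    rcases Int.units_eq_one_or (s a) with ha | ha <;> simp [commSign, hS.neg_one_pow, mem_S, ha]
  · have hSc : Odd Sᶜ.card := by
      rw [Finset.card_compl]
      exact Nat.Even.sub_odd (Finset.card_le_univ S) hn hS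
    refine ⟨Sᶜ, funext fun a => ?_⟩
    rcases Int.units_eq_one_or (s a) with ha | ha <;> simp [commSign, hSc.neg_one_pow, mem_S, ha]

theorem commSign_injective (hn : Even (Fintype.card I)) :
    Function.Injective (commSign : Finset I → I → ℤˣ) :=
  ((Fintype.bijective_iff_surjective_and_card _).2 ⟨commSign_surjective hn, by simp⟩).1

theorem intCast_commSign_injective {R : Type*} [Ring R] [NeZero (2 : R)]
    (hn : Even (Fintype.card I)) :
    Function.Injective fun (B : Finset I) (a : I) => ((commSign B a : ℤ) : R) :=
  fun _ _ h => commSign_injective hn <| funext fun a => intCast_units_injective (congrFun h a)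

end CommSign

/-- The product of the `β b`, `b ∈ B`, in the unspecified order of `Finset.toList`. -/
noncomputable def cliffordMonomial {I A : Type*} [Monoid A] (β : I → A) (B : Finset I) : A :=
  (B.toList.map β).prod

/-- A family `β` satisfies the Clifford relations of the diagonal quadratic form with
coefficients `w`. -/
structure IsCliffordFamily_s13 {K I A : Type*} [CommSemiring K] [Ring A] [Algebra K A] (w : I → K)
    (β : I → A) : Prop where
  mul_self : ∀ a, β a * β a = algebraMap K A (w a)
  anticomm : Pairwise fun a b => β a * β b = -(β b * β a)

/-- The operator `x ↦ β_a x γ_a⁻¹`, written with `γ_a⁻¹ = w_a⁻¹ γ_a` since `γ_a² = w_a`. -/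
def twistedConj {K I A : Type*} [Field K] [Ring A] [Algebra K A] (w : I → K) (β γ : I → A) (a : I) :
    Module.End K A :=
  (w a)⁻¹ • LinearMap.mulLeftRight K (β a, γ a)

namespace IsCliffordFamily_s13

section Monomials

variable {K I A : Type*} [CommSemiring K] [Ring A] [Algebra K A] {w : I → K} {β γ : I → A}

theorem mul_list_prod [DecidableEq I] (hβ : IsCliffordFamily_s13 w β) (a : I) (l : List I) :
    β a * (l.map β).prod = (-1 : ℤˣ) ^ (l.length + l.count a) • ((l.map β).prod * β a) := by
  induction l with
  | nil => simp
  | cons b l ih =>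
    rw [List.map_cons, List.prod_cons, List.length_cons]
    rcases eq_or_ne a b with rfl | hab
    · have hpow : l.length + 1 + (l.count a + 1) = l.length + l.count a + 2 := by ring
      rw [List.count_cons_self, hpow, pow_add, neg_one_sq, mul_one, mul_assoc, ← mul_smul_comm,
        ← ih]
    · rw [List.count_cons_of_ne hab.symm, ← mul_assoc, hβ.anticomm hab, neg_mul, mul_assoc, ih,
        mul_smul_comm, mul_assoc, add_right_comm, pow_succ, mul_neg_one, Units.neg_smul]

theorem mul_cliffordMonomial [DecidableEq I] (hβ : IsCliffordFamily_s13 w β) (a : I) (B : Finset I) :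
    β a * cliffordMonomial β B = commSign B a • (cliffordMonomial β B * β a) := by
  have hcount : B.toList.count a = if a ∈ B then 1 else 0 := by
    simp [List.Nodup.count (Finset.nodup_toList B)]
  rw [cliffordMonomial, hβ.mul_list_prod, Finset.length_toList, hcount, commSign, pow_add]
  split_ifs <;> simp

theorem mul_cliffordMonomial_mul [DecidableEq I] (hβ : IsCliffordFamily_s13 w β) {a : I} {x : A}
    {s : ℤˣ} (hx : β a * x = s • (x * γ a)) (B : Finset I) :
    β a * (cliffordMonomial β B * x) = (commSign B a * s) • (cliffordMonomial β B * x * γ a) := by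
  rw [← mul_assoc, hβ.mul_cliffordMonomial, smul_mul_assoc, mul_assoc, hx, mul_smul_comm, smul_smul,
    mul_assoc]

theorem isUnit (hβ : IsCliffordFamily_s13 w β) {a : I} (ha : IsUnit (w a)) : IsUnit (β a) :=
  (isUnit_pow_iff two_ne_zero).1 <| by
    rw [sq, hβ.mul_self]
    exact ha.map (algebraMap K A)

theorem isUnit_cliffordMonomial (hβ : IsCliffordFamily_s13 w β) (hw : ∀ a, IsUnit (w a))
    (B : Finset I) : IsUnit (cliffordMonomial β B) :=
  List.prod_isUnit <| List.forall_mem_map.2 fun a _ => hβ.isUnit (hw a)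

end Monomials

variable {K I A : Type*} [Field K] [Ring A] [Algebra K A] {w : I → K} {β γ : I → A}

theorem of_mul_add_swap [NeZero (2 : K)] [DecidableEq I]
    (h : ∀ a b, β a * β b + β b * β a = (2 * Matrix.diagonal w a b) • (1 : A)) :
    IsCliffordFamily_s13 w β where
  mul_self a := by
    have hsq := h a a
    rw [← two_smul K, Matrix.diagonal_apply_eq, mul_smul] at hsq
    rw [Algebra.algebraMap_eq_smul_one, smul_right_injective A (two_ne_zero (α := K)) hsq]
  anticomm a b hab := by
    have hadd := h a b
    rw [Matrix.diagonal_apply_ne _ hab, mul_zero, zero_smul] at hadd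
    exact eq_neg_of_add_eq_zero_left hadd

theorem twistedConj_apply_eq_iff (hγ : IsCliffordFamily_s13 w γ) {a : I} (ha : w a ≠ 0) {x : A}
    {s : ℤˣ} :
    twistedConj w β γ a x = s • x ↔ β a * x = s • (x * γ a) := by
  rw [← (hγ.isUnit ha.isUnit).mul_left_inj]
  simp [twistedConj, smul_mul_assoc, mul_assoc, hγ.mul_self, ← Algebra.commutes, ← Algebra.smul_def,
    smul_smul, ha]

theorem twistedConj_involutive (hβ : IsCliffordFamily_s13 w β) (hγ : IsCliffordFamily_s13 w γ) {a : I}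
    (ha : w a ≠ 0) : Function.Involutive (twistedConj w β γ a) := by
  intro x
  calc twistedConj w β γ a (twistedConj w β γ a x)
      = ((w a)⁻¹ * (w a)⁻¹) • (β a * β a * x * (γ a * γ a)) := by
        simp [twistedConj, mul_assoc, smul_smul]
    _ = x := by
        rw [hβ.mul_self, hγ.mul_self, mul_assoc, ← Algebra.commutes, ← Algebra.smul_def,
          ← Algebra.smul_def, smul_smul, smul_smul, ← mul_inv, mul_assoc,
          inv_mul_cancel₀ (mul_ne_zero ha ha), one_smul]

theorem twistedConj_commute (hβ : IsCliffordFamily_s13 w β) (hγ : IsCliffordFamily_s13 w γ) (a b : I) :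
    Commute (twistedConj w β γ a) (twistedConj w β γ b) := by
  rcases eq_or_ne a b with rfl | hab
  · exact Commute.refl _
  refine LinearMap.ext fun x => ?_
  have hcomm : β a * β b * x * (γ b * γ a) = β b * β a * x * (γ a * γ b) := by
    rw [hβ.anticomm hab, hγ.anticomm hab]
    simp only [neg_mul, mul_neg]
  simpa [twistedConj, mul_assoc, smul_smul, mul_comm (w a)⁻¹] using
    congrArg (fun y => ((w b)⁻¹ * (w a)⁻¹) • y) hcomm

theorem twistedConj_cliffordMonomial_mul [DecidableEq I] (hβ : IsCliffordFamily_s13 w β)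
    (hγ : IsCliffordFamily_s13 w γ) {a : I} (ha : w a ≠ 0) {T : A} (hT : β a * T = T * γ a)
    (B : Finset I) :
    twistedConj w β γ a (cliffordMonomial β B * T) =
      ((commSign B a : ℤ) : K) • (cliffordMonomial β B * T) := by
  have hmul := hβ.mul_cliffordMonomial_mul (s := 1) (by rw [hT, one_smul]) B
  rw [mul_one] at hmul
  rw [(hγ.twistedConj_apply_eq_iff ha).2 hmul, Units.smul_def, Int.cast_smul_eq_zsmul]

variable [Fintype I]

theorem exists_ne_zero_forall_mul_eq_mul [Nontrivial A] (hn : Even (Fintype.card I))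
    (hw : ∀ a, w a ≠ 0) (hβ : IsCliffordFamily_s13 w β) (hγ : IsCliffordFamily_s13 w γ) :
    ∃ T : A, T ≠ 0 ∧ ∀ a, β a * T = T * γ a := by
  classical
  obtain ⟨x, hx0, s, hx⟩ := exists_joint_eigenvector_of_involutive
    (fun a b _ => hβ.twistedConj_commute hγ a b) fun a => hβ.twistedConj_involutive hγ (hw a)
  obtain ⟨B, rfl⟩ := commSign_surjective hn s
  have hunit := hβ.isUnit_cliffordMonomial (fun a => (hw a).isUnit) B
  refine ⟨cliffordMonomial β B * x, hunit.mul_right_eq_zero.not.2 hx0, fun a => ?_⟩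
  have hxa := (hγ.twistedConj_apply_eq_iff (hw a)).1 (hx a)
  rw [hβ.mul_cliffordMonomial_mul hxa, Int.units_mul_self, one_smul]

variable [NeZero (2 : K)] {T T' : A}

theorem linearIndependent_cliffordMonomial_mul (hn : Even (Fintype.card I)) (hw : ∀ a, w a ≠ 0)
    (hβ : IsCliffordFamily_s13 w β) (hγ : IsCliffordFamily_s13 w γ) (hT0 : T ≠ 0)
    (hT : ∀ a, β a * T = T * γ a) :
    LinearIndependent K fun B => cliffordMonomial β B * T := by
  classical
  have hunit := hβ.isUnit_cliffordMonomial fun a => (hw a).isUnit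
  exact linearIndependent_of_joint_eigenvectors (hβ.twistedConj_commute hγ)
    (fun B => (hunit B).mul_right_eq_zero.not.2 hT0) (intCast_commSign_injective hn)
    fun B a => hβ.twistedConj_cliffordMonomial_mul hγ (hw a) (hT a) B

theorem isUnit_of_mul_eq_mul (hn : Even (Fintype.card I))
    (hA : Module.finrank K A = 2 ^ Fintype.card I) (hw : ∀ a, w a ≠ 0)
    (hβ : IsCliffordFamily_s13 w β) (hγ : IsCliffordFamily_s13 w γ) (hT0 : T ≠ 0)
    (hT : ∀ a, β a * T = T * γ a) : IsUnit T := by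
  have : FiniteDimensional K A := Module.finite_of_finrank_pos (by simp [hA])
  have hspan := (hβ.linearIndependent_cliffordMonomial_mul hn hw hγ hT0
    hT).span_eq_top_of_card_eq_finrank' (by simp [hA])
  have hsurj : Function.Surjective (LinearMap.mulRight K T) := by
    rw [← LinearMap.range_eq_top, eq_top_iff, ← hspan, Submodule.span_le]
    rintro _ ⟨B, rfl⟩
    exact ⟨cliffordMonomial β B, rfl⟩
  exact IsUnit.isUnit_iff_mulRight_bijective.2 ⟨LinearMap.injective_iff_surjective.2 hsurj, hsurj⟩

theorem exists_eq_smul_of_mul_eq_mul (hn : Even (Fintype.card I))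
    (hA : Module.finrank K A = 2 ^ Fintype.card I) (hw : ∀ a, w a ≠ 0)
    (hβ : IsCliffordFamily_s13 w β) (hγ : IsCliffordFamily_s13 w γ) (hT0 : T ≠ 0)
    (hT : ∀ a, β a * T = T * γ a) (hT' : ∀ a, β a * T' = T' * γ a) :
    ∃ c : K, T' = c • T := by
  classical
  let b := basisOfLinearIndependentOfCardEqFinrank
    (hβ.linearIndependent_cliffordMonomial_mul hn hw hγ hT0 hT) (by simp [hA])
  have hb (B : Finset I) : b B = cliffordMonomial β B * T := by
    simp [b]
  have hb_empty : b ∅ = T := by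
    simp [hb, cliffordMonomial]
  have heigen (B : Finset I) (a : I) :
      twistedConj w β γ a (b B) = ((commSign B a : ℤ) : K) • b B := by
    rw [hb, hβ.twistedConj_cliffordMonomial_mul hγ (hw a) (hT a)]
  have hfixed (a : I) : twistedConj w β γ a T' = ((commSign ∅ a : ℤ) : K) • T' := by
    simpa [commSign, hT'] using hγ.twistedConj_apply_eq_iff (hw a) (β := β) (x := T') (s := 1)
  rw [← hb_empty]
  exact ⟨b.repr T' ∅, eq_smul_of_joint_eigenvector b (intCast_commSign_injective hn) heigen hfixed⟩

end IsCliffordFamily_s13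

theorem finrank_cliffordAlgebra_s13 {K V : Type*} [Field K] [NeZero (2 : K)] [AddCommGroup V]
    [Module K V] [FiniteDimensional K V] (Q : QuadraticForm K V) :
    Module.finrank K (CliffordAlgebra Q) = 2 ^ Module.finrank K V := by
  have : Invertible (2 : K) := invertibleOfNonzero two_ne_zero
  rw [(equivExterior Q).finrank_eq,
    Module.finrank_eq_card_basis (Module.finBasis K V).ExteriorAlgebra, Fintype.card_finset,
    Fintype.card_fin]

theorem pauli_even_general {K I A : Type*} [Field K] [NeZero (2 : K)] [Fintype I] [Ring A]
    [Algebra K A] (hn : Even (Fintype.card I)) (hA : Module.finrank K A = 2 ^ Fintype.card I)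
    {w : I → K} (hw : ∀ a, w a ≠ 0) {γ β : I → A} (hγ : IsCliffordFamily_s13 w γ)
    (hβ : IsCliffordFamily_s13 w β) :
    ∃ T : Aˣ, (∀ a, γ a = (↑T⁻¹ : A) * β a * (T : A)) ∧
      ∀ T' : Aˣ, (∀ a, γ a = (↑T'⁻¹ : A) * β a * (T' : A)) →
        ∃ c : K, c ≠ 0 ∧ (T' : A) = c • (T : A) := by
  have hconj (T : Aˣ) (a : I) :
      γ a = (↑T⁻¹ : A) * β a * (T : A) ↔ β a * (T : A) = (T : A) * γ a := by
    rw [mul_assoc, Units.eq_inv_mul_iff_mul_eq, eq_comm]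
  simp only [hconj]
  have : Nontrivial A := Module.nontrivial_of_finrank_pos (R := K) (by simp [hA])
  obtain ⟨T, hT0, hT⟩ := hβ.exists_ne_zero_forall_mul_eq_mul hn hw hγ
  obtain ⟨T, rfl⟩ := hβ.isUnit_of_mul_eq_mul hn hA hw hγ hT0 hT
  refine ⟨T, hT, fun T' hT' => ?_⟩
  obtain ⟨c, hc⟩ := hβ.exists_eq_smul_of_mul_eq_mul hn hA hw hγ hT0 hT hT'
  exact ⟨c, left_ne_zero_of_smul (hc ▸ T'.ne_zero), hc⟩

/-- Generalized Pauli theorem, even case: if `n = p + q` is even and `γ`, `β` are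
two families in `Cl_{p,q}` satisfying the defining anticommutation relations, then
there is an invertible `T` with `γ_a = T⁻¹ β_a T` for all `a`, unique up to a
nonzero real scalar. -/
theorem pauli_even (p q : ℕ) (hn : Even (p + q)) (γ β : Fin (p + q) → Cl p q)
    (hγ : ∀ a b, γ a * γ b + γ b * γ a = (2 * etaPQ p q a b) • (1 : Cl p q))
    (hβ : ∀ a b, β a * β b + β b * β a = (2 * etaPQ p q a b) • (1 : Cl p q)) :
    ∃ T : (Cl p q)ˣ,
      (∀ a, γ a = (↑T⁻¹ : Cl p q) * β a * (T : Cl p q)) ∧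
      ∀ T' : (Cl p q)ˣ, (∀ a, γ a = (↑T'⁻¹ : Cl p q) * β a * (T' : Cl p q)) →
        ∃ lam : ℝ, lam ≠ 0 ∧ (T' : Cl p q) = lam • (T : Cl p q) := by
  refine pauli_even_general (w := fun a : Fin (p + q) => if (a : ℕ) < p then (1 : ℝ) else -1)
    (by simpa using hn) ?_ (fun a => ?_) (.of_mul_add_swap hγ) (.of_mul_add_swap hβ)
  · rw [finrank_cliffordAlgebra_s13, Module.finrank_fin_fun, Fintype.card_fin]
  · split_ifs <;> norm_num
end
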